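/- arXiv:1609.02340 — 5 statements merged into one kernel-verified Lean document; each statement's English description precedes it below -/
import Mathlib

section
/- Let a = (a_1,…,a_{p−1}) and b = (b_1,…,b_p) be vectors of positive reals. Then there exists an integer n ≥ 1 such that the function r ↦ p−1Fp(a;b;−r²) on [0,∞) is not n-RPD (i.e. this function never belongs to Φ_∞ = ∩_n Φ_n). -/
/-!
Write `F(-x) = ∑ (-1)^j m_j x^j / j!`, where `m_j = ∏ (a_i)_j / ∏ (b_i)_j`, and let
`H_k(x) = ∑_j m_{k+j} (-x)^j / j!`, so that `H_0(x) = F(-x)` and `H_k' = -H_{k+1}`.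

Suppose `x ↦ H_0(x²)` were radial positive definite in every dimension.  The class of functions
`H` for which `H(‖t_i - t_j‖²)` is a positive semidefinite matrix for all finite configurations in
all dimensions is closed under `H ↦ H - H(· + h)` for `h ≥ 0` (double the configuration in one
extra coordinate, with opposite weights; `RadialPD.sub_shift`), hence under `H ↦ -H'`
(`RadialPD.neg_deriv`), so it contains every `H_k`.  For `H` in the class, testing on the origin
and on `N` orthogonal vectors of squared length `s` gives, as `N → ∞`, the positivity of the
matrix `[[H 0, H s], [H s, H (2s)]]` (`RadialPD.sq_le`).  Expanding `H(s)² ≤ H(0) H(2s)` to second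
order at `0` gives `H'(0)² ≤ H(0) H''(0)` (`sq_deriv_le`), which for `H_k` reads
`m_{k+1}² ≤ m_k m_{k+2}`: the ratios `m_{k+1}/m_k` are nondecreasing.  But
`m_{k+1}/m_k = ∏ (a_i + k) / ∏ (b_i + k)` is positive and tends to `0`, as there is one more
denominator parameter than numerator parameters: a contradiction.
-/

/-- Rising factorial (Pochhammer symbol) `(x)_k = x(x+1)⋯(x+k-1)` for real `x`. -/
noncomputable def risingFactorial (x : ℝ) (k : ℕ) : ℝ := ∏ i ∈ Finset.range k, (x + (i : ℝ))

/-- The generalized hypergeometric function `pFq(a;b;z)` with real parameters and real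
argument, defined by its power series (which converges for every `z` when `p ≤ q`). -/
noncomputable def pFq {p q : ℕ} (a : Fin p → ℝ) (b : Fin q → ℝ) (z : ℝ) : ℝ :=
  ∑' k : ℕ,
    (∏ i, risingFactorial (a i) k) /
      ((∏ j, risingFactorial (b j) k) * (k.factorial : ℝ)) * z ^ k


/-- A continuous function `f : [0,∞) → ℝ` (modelled as `f : ℝ → ℝ` continuous on
`[0,∞)`) is `n`-RPD (radial positive definite in dimension `n`, class `Φ_n`) if for all
`m`, all points `t_1,…,t_m ∈ ℝ^n` and all complex `ξ_1,…,ξ_m`, the Hermitian sum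
`∑_{i,j} f(‖t_i - t_j‖) ξ_i conj(ξ_j)` is a nonnegative real number. -/
def IsRPD (n : ℕ) (f : ℝ → ℝ) : Prop :=
  ContinuousOn f (Set.Ici 0) ∧
  ∀ (m : ℕ) (t : Fin m → EuclideanSpace ℝ (Fin n)) (ξ : Fin m → ℂ),
    ∃ c : ℝ, 0 ≤ c ∧
      (∑ i, ∑ j, (f ‖t i - t j‖ : ℂ) * ξ i * (starRingEnd ℂ) (ξ j)) = (c : ℂ)

open Filter Topology

/-! ### Functions that are radially positive definite in all dimensions -/

/-- `x ↦ H (x ^ 2)` is radially positive definite in every positive dimension, tested with real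
weights only.  The space is `κ → ℝ`, and the squared Euclidean distance is written out. -/
def RadialPD (H : ℝ → ℝ) : Prop :=
  ∀ (κ ι : Type) [Fintype κ] [Nonempty κ] [Fintype ι] (t : ι → κ → ℝ) (ξ : ι → ℝ),
    0 ≤ ∑ i, ∑ j, H (∑ x, (t i x - t j x) ^ 2) * (ξ i * ξ j)

/-- Each point is doubled to `(t i, √h)` and `(t i, 0)`, with weights `ξ i` and `-ξ i`. -/
lemma RadialPD.sub_shift {H : ℝ → ℝ} (hH : RadialPD H) {h : ℝ} (hh : 0 ≤ h) :
    RadialPD (fun x => H x - H (x + h)) := by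
  intro κ ι _ _ _ t ξ
  have key := hH (Option κ) (ι ⊕ ι)
    (Sum.elim (fun i o => o.elim (Real.sqrt h) (t i)) (fun i o => o.elim 0 (t i)))
    (Sum.elim ξ (fun i => - ξ i))
  simp only [Fintype.sum_sum_type, Fintype.sum_option, Sum.elim_inl, Sum.elim_inr,
    Option.elim, sub_self, sub_zero, zero_sub, neg_sq, Real.sq_sqrt hh] at key
  simp only [← Finset.sum_add_distrib] at key
  have e : ∀ i j, (H (0 ^ 2 + ∑ x, (t i x - t j x) ^ 2) * (ξ i * ξ j)
        + H (h + ∑ x, (t i x - t j x) ^ 2) * (ξ i * -ξ j)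
      + (H (h + ∑ x, (t i x - t j x) ^ 2) * (-ξ i * ξ j)
        + H (0 ^ 2 + ∑ x, (t i x - t j x) ^ 2) * (-ξ i * -ξ j)))
      = 2 * ((H (∑ x, (t i x - t j x) ^ 2) - H (∑ x, (t i x - t j x) ^ 2 + h)) * (ξ i * ξ j)) := by
    intro i j
    rw [add_comm h, zero_pow two_ne_zero, zero_add]
    ring
  simp only [e, ← Finset.mul_sum] at key
  linarith

lemma RadialPD.neg_deriv {H H' : ℝ → ℝ} (hH : RadialPD H)
    (hd : ∀ x, HasDerivAt H (-H' x) x) : RadialPD H' := by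
  intro κ ι _ _ _ t ξ
  have hlim : ∀ x, Tendsto (fun h : ℝ => h⁻¹ * (H x - H (x + h))) (𝓝[>] 0) (𝓝 (H' x)) := by
    intro x
    have := (hd x).tendsto_slope_zero_right.neg
    simp only [smul_eq_mul, neg_neg] at this
    refine this.congr fun h => ?_
    ring
  have hsum : Tendsto (fun h : ℝ => ∑ i, ∑ j,
      (h⁻¹ * (H (∑ x, (t i x - t j x) ^ 2) - H (∑ x, (t i x - t j x) ^ 2 + h))) * (ξ i * ξ j))
      (𝓝[>] 0) (𝓝 (∑ i, ∑ j, H' (∑ x, (t i x - t j x) ^ 2) * (ξ i * ξ j))) :=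
    tendsto_finsetSum _ fun i _ => tendsto_finsetSum _ fun j _ => (hlim _).mul_const _
  refine ge_of_tendsto hsum ?_
  filter_upwards [self_mem_nhdsWithin] with h hh
  have hh' : 0 < h := hh
  have := mul_nonneg (inv_nonneg.2 hh'.le) (hH.sub_shift hh'.le κ ι t ξ)
  simp only [Finset.mul_sum] at this
  simpa only [mul_assoc] using this

lemma RadialPD.form_nonneg {H : ℝ → ℝ} (hH : RadialPD H) {s : ℝ} (hs : 0 ≤ s) (x y : ℝ) :
    0 ≤ H 0 * x ^ 2 + 2 * H s * (x * y) + H (2 * s) * y ^ 2 := by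
  -- The origin with weight `(N + 1) x` and `N + 1` orthogonal vectors of squared length `s`, each
  -- with weight `y`; after division by `(N + 1)²` the diagonal contributes an error of order `1/N`.
  have key : ∀ N : ℕ, 0 ≤ (H 0 * x ^ 2 + 2 * H s * (x * y) + H (2 * s) * y ^ 2)
      + (H 0 - H (2 * s)) * y ^ 2 * (1 / ((N : ℝ) + 1)) := by
    intro N
    have hq := hH (Fin (N + 1)) (Option (Fin (N + 1)))
      (fun o => o.elim 0 (fun k => Pi.single k (Real.sqrt s)))
      (fun o => o.elim (((N : ℝ) + 1) * x) (fun _ => y))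
    have d0 : ∀ k : Fin (N + 1),
        ∑ l, ((Pi.single k (Real.sqrt s) : Fin (N + 1) → ℝ) l) ^ 2 = s := by
      intro k
      rw [Finset.sum_eq_single k]
      · simp [Real.sq_sqrt hs]
      · intro b _ hb
        simp [hb]
      · simp
    have d1 : ∀ k k' : Fin (N + 1),
        ∑ l, ((Pi.single k (Real.sqrt s) : Fin (N + 1) → ℝ) l
          - (Pi.single k' (Real.sqrt s) : Fin (N + 1) → ℝ) l) ^ 2
          = if k = k' then 0 else 2 * s := by
      intro k k'
      split_ifs with hk
      · simp [hk]
      · have : ∀ l, ((Pi.single k (Real.sqrt s) : Fin (N + 1) → ℝ) l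
          - (Pi.single k' (Real.sqrt s) : Fin (N + 1) → ℝ) l) ^ 2
          = ((Pi.single k (Real.sqrt s) : Fin (N + 1) → ℝ) l) ^ 2
          + ((Pi.single k' (Real.sqrt s) : Fin (N + 1) → ℝ) l) ^ 2 := by
          intro l
          by_cases h1 : l = k
          · have h2 : l ≠ k' := fun h => hk (h1 ▸ h)
            simp [Pi.single_apply, h2]
          · simp [Pi.single_apply, h1]
        simp only [this, Finset.sum_add_distrib, d0]
        ring
    have d2 : ∀ k k' : Fin (N + 1), H (if k = k' then 0 else 2 * s) * (y * y)
        = H (2 * s) * y ^ 2 + if k = k' then (H 0 - H (2 * s)) * y ^ 2 else 0 := by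
      intro k k'
      split_ifs <;> ring
    simp only [Fintype.sum_option, Option.elim, Pi.zero_apply, sub_zero, zero_sub, neg_sq, d0,
      d1, d2, Finset.sum_add_distrib, Finset.sum_const, Finset.card_univ, Fintype.card_fin,
      Finset.sum_ite_eq, Finset.mem_univ, if_true, nsmul_eq_mul, zero_pow two_ne_zero,
      mul_zero, Nat.cast_add, Nat.cast_one] at hq
    have hN : (0 : ℝ) < (N : ℝ) + 1 := by positivity
    have := mul_nonneg hq (by positivity : 0 ≤ (1 / ((N : ℝ) + 1)) ^ 2)
    refine this.trans_eq ?_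
    field_simp
    ring
  have hlim : Tendsto (fun N : ℕ => (H 0 * x ^ 2 + 2 * H s * (x * y) + H (2 * s) * y ^ 2)
      + (H 0 - H (2 * s)) * y ^ 2 * (1 / ((N : ℝ) + 1))) atTop
      (𝓝 ((H 0 * x ^ 2 + 2 * H s * (x * y) + H (2 * s) * y ^ 2)
        + (H 0 - H (2 * s)) * y ^ 2 * 0)) :=
    tendsto_const_nhds.add (tendsto_one_div_add_atTop_nhds_zero_nat.const_mul _)
  rw [mul_zero, add_zero] at hlim
  exact ge_of_tendsto' hlim key

lemma RadialPD.sq_le {H : ℝ → ℝ} (hH : RadialPD H) (h0 : 0 < H 0) {s : ℝ} (hs : 0 ≤ s) :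
    H s ^ 2 ≤ H 0 * H (2 * s) := by
  have := hH.form_nonneg hs (-H s) (H 0)
  by_contra! hc
  have := mul_pos h0 (sub_pos.2 hc)
  nlinarith

/-- Second-order comparison at `0` in `H(s)² ≤ H(0) H(2s)`, which is an equality to first
order. -/
lemma sq_deriv_le {H H1 H2 : ℝ → ℝ} (hd : ∀ x, HasDerivAt H (-H1 x) x)
    (hd1 : ∀ x, HasDerivAt H1 (-H2 x) x)
    (hle : ∀ s, 0 ≤ s → H s ^ 2 ≤ H 0 * H (2 * s)) : H1 0 ^ 2 ≤ H 0 * H2 0 := by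
  by_contra! hc
  -- The added `ε s²` turns the second derivative test into a strict contradiction.
  set ε : ℝ := (H1 0 ^ 2 - H 0 * H2 0) / 2 with hε
  have hε0 : 0 < ε := by rw [hε]; linarith
  set φ : ℝ → ℝ := fun s => H 0 * H (2 * s) - H s ^ 2 + ε * s ^ 2 with hφ
  have h2 : ∀ s : ℝ, HasDerivAt (fun s : ℝ => 2 * s) 2 s := fun s => by
    simpa using (hasDerivAt_id s).const_mul (2 : ℝ)
  have hφ1 : ∀ s, HasDerivAt φ (-2 * H 0 * H1 (2 * s) + 2 * H s * H1 s + 2 * ε * s) s := by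
    intro s
    have e1 := ((hd (2 * s)).comp s (h2 s)).const_mul (H 0)
    have e2 := (hd s).pow 2
    have e3 := (hasDerivAt_pow 2 s).const_mul ε
    refine ((e1.sub e2).add e3).congr_deriv ?_
    push_cast
    ring
  have hφ2 : HasDerivAt (fun s => -2 * H 0 * H1 (2 * s) + 2 * H s * H1 s + 2 * ε * s)
      (2 * H 0 * H2 0 - 2 * H1 0 ^ 2 + 2 * ε) 0 := by
    have e1 := ((hd1 (2 * 0)).comp 0 (h2 0)).const_mul (-2 * H 0)
    have e2 := ((hd 0).const_mul 2).mul (hd1 0)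
    have e3 := (hasDerivAt_id (0 : ℝ)).const_mul (2 * ε)
    refine ((e1.add e2).add e3).congr_deriv ?_
    rw [mul_zero]
    ring
  have hder : deriv φ = fun s => -2 * H 0 * H1 (2 * s) + 2 * H s * H1 s + 2 * ε * s :=
    funext fun s => (hφ1 s).deriv
  have hmax : IsLocalMax φ 0 := by
    apply isLocalMax_of_deriv_deriv_neg
    · rw [hder, hφ2.deriv, hε]
      linarith
    · rw [hder]
      simp
    · exact (hφ1 0).continuousAt
  have hφ0 : φ 0 = 0 := by simp [hφ]; ring
  have hev : ∀ᶠ s in 𝓝[>] (0 : ℝ), φ s ≤ φ 0 := nhdsWithin_le_nhds hmax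
  obtain ⟨s, hs, hs0⟩ := (hev.and self_mem_nhdsWithin).exists
  have hs0' : 0 < s := hs0
  have := hle s hs0'.le
  have : 0 < ε * s ^ 2 := by positivity
  rw [hφ0] at hs
  simp only [hφ] at hs
  linarith

/-! ### Exponential generating functions -/

/-- The exponential generating function `∑ u_j z^j / j!`. -/
noncomputable def egf (u : ℕ → ℝ) (z : ℝ) : ℝ := ∑' j, u j * (z ^ j / (j.factorial : ℝ))

lemma egf_zero (u : ℕ → ℝ) : egf u 0 = u 0 := by
  rw [egf, tsum_eq_single 0]
  · simp
  · intro j hj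
    simp [hj]

lemma hasDerivAt_egf {u : ℕ → ℝ} {C M : ℝ} (hu : ∀ j, |u j| ≤ C * M ^ j) (z : ℝ) :
    HasDerivAt (egf u) (egf (fun j => u (j + 1)) z) z := by
  have hC : 0 ≤ C := by simpa using (abs_nonneg _).trans (hu 0)
  set R : ℝ := |z| + 1 with hR
  have hz : z ∈ Metric.ball (0 : ℝ) R := by simp [hR]
  set g' : ℕ → ℝ → ℝ := fun n y => u n * ((n : ℝ) * y ^ (n - 1) / (n.factorial : ℝ)) with hg'
  have hg'0 : ∀ y, g' 0 y = 0 := by intro y; simp [hg']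
  have hg's : ∀ n y, g' (n + 1) y = u (n + 1) * (y ^ n / (n.factorial : ℝ)) := by
    intro n y
    simp only [hg', Nat.factorial_succ, Nat.add_sub_cancel]
    push_cast
    have : (n : ℝ) + 1 ≠ 0 := by positivity
    field_simp
  set B : ℕ → ℝ := fun n => Nat.casesOn n 0 (fun n => C * M * ((M * R) ^ n / (n.factorial : ℝ)))
    with hB
  have hBs : Summable B := by
    rw [← summable_nat_add_iff 1]
    exact (Real.summable_pow_div_factorial (M * R)).mul_left (C * M)
  have hsum : Summable fun j => u j * ((0 : ℝ) ^ j / (j.factorial : ℝ)) := by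
    refine summable_of_ne_finset_zero (s := {0}) ?_
    intro j hj
    simp at hj
    simp [hj]
  have hmain := hasDerivAt_tsum_of_isPreconnected (g := fun j y => u j * (y ^ j / (j.factorial : ℝ)))
    (g' := g') (t := Metric.ball (0 : ℝ) R) (y₀ := 0) (y := z) hBs Metric.isOpen_ball
    (convex_ball 0 R).isPreconnected
    (fun n y _ => ((hasDerivAt_pow n y).div_const _).const_mul _)
    (fun n y hy => ?_) (by simp [hR]; positivity) hsum hz
  · refine hmain.congr_deriv ?_
    have hs : Summable fun n => g' n z := by
      rw [← summable_nat_add_iff 1]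
      simp only [hg's]
      refine Summable.of_norm_bounded ((Real.summable_pow_div_factorial (M * |z|)).mul_left (C * M))
        fun n => ?_
      rw [Real.norm_eq_abs, abs_mul, abs_div, abs_pow, Nat.abs_cast]
      calc _ ≤ C * M ^ (n + 1) * (|z| ^ n / (n.factorial : ℝ)) := by gcongr; exact hu _
        _ = _ := by rw [mul_pow]; ring
    rw [hs.tsum_eq_zero_add, hg'0, zero_add]
    simp only [hg's, egf]
  · cases n with
    | zero => simp [hg'0, hB]
    | succ n =>
      have hy' : |y| ≤ R := by simpa using (Metric.mem_ball.1 hy).le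
      rw [hg's, Real.norm_eq_abs, abs_mul, abs_div, abs_pow, Nat.abs_cast]
      calc _ ≤ C * M ^ (n + 1) * (R ^ n / (n.factorial : ℝ)) := by
            have := hu (n + 1)
            have h0 : 0 ≤ C * M ^ (n + 1) := (abs_nonneg _).trans this
            gcongr
        _ = _ := by simp only [hB]; rw [mul_pow]; ring

/-! ### Coefficients of the hypergeometric series -/

section Coefficients

variable {p : ℕ}

/-- `k!` times the `k`-th coefficient of the hypergeometric series. -/
noncomputable def hypMoment (a : Fin p → ℝ) (b : Fin (p + 1) → ℝ) (k : ℕ) : ℝ :=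
  (∏ i, risingFactorial (a i) k) / ∏ j, risingFactorial (b j) k

/-- The ratio of consecutive terms of `hypMoment`. -/
noncomputable def hypRatio (a : Fin p → ℝ) (b : Fin (p + 1) → ℝ) (k : ℕ) : ℝ :=
  (∏ i, (a i + (k : ℝ))) / ∏ j, (b j + (k : ℝ))

variable {a : Fin p → ℝ} {b : Fin (p + 1) → ℝ}

lemma hypMoment_zero : hypMoment a b 0 = 1 := by simp [hypMoment, risingFactorial]

lemma hypMoment_succ (k : ℕ) : hypMoment a b (k + 1) = hypMoment a b k * hypRatio a b k := by
  simp only [hypMoment, hypRatio, risingFactorial, Finset.prod_range_succ,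
    Finset.prod_mul_distrib]
  rw [mul_div_mul_comm]

lemma hypRatio_pos (ha : ∀ i, 0 < a i) (hb : ∀ j, 0 < b j) (k : ℕ) : 0 < hypRatio a b k :=
  div_pos (Finset.prod_pos fun i _ => add_pos_of_pos_of_nonneg (ha i) k.cast_nonneg)
    (Finset.prod_pos fun i _ => add_pos_of_pos_of_nonneg (hb i) k.cast_nonneg)

lemma hypMoment_pos (ha : ∀ i, 0 < a i) (hb : ∀ j, 0 < b j) (k : ℕ) : 0 < hypMoment a b k := by
  induction k with
  | zero => simp [hypMoment_zero]
  | succ k ih => rw [hypMoment_succ]; exact mul_pos ih (hypRatio_pos ha hb k)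

lemma tendsto_hypRatio : Tendsto (hypRatio a b) atTop (𝓝 0) := by
  have hinv : ∀ c : ℝ, Tendsto (fun k : ℕ => (c + (k : ℝ))⁻¹) atTop (𝓝 0) := fun c =>
    tendsto_inv_atTop_zero.comp (tendsto_atTop_add_const_left _ c tendsto_natCast_atTop_atTop)
  have hone : ∀ c d : ℝ, Tendsto (fun k : ℕ => (c + (k : ℝ)) / (d + (k : ℝ))) atTop (𝓝 1) := by
    intro c d
    have h1 : Tendsto (fun k : ℕ => 1 + (c - d) * (d + (k : ℝ))⁻¹) atTop
        (𝓝 (1 + (c - d) * 0)) := tendsto_const_nhds.add ((hinv d).const_mul _)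
    rw [mul_zero, add_zero] at h1
    refine h1.congr' ?_
    have h2 : Tendsto (fun k : ℕ => d + (k : ℝ)) atTop atTop :=
      tendsto_atTop_add_const_left _ d tendsto_natCast_atTop_atTop
    filter_upwards [h2.eventually_gt_atTop 0] with k hk
    field_simp
    ring
  have := (hinv (b 0)).mul (tendsto_finsetProd (Finset.univ : Finset (Fin p))
    fun i _ => hone (a i) (b i.succ))
  rw [zero_mul] at this
  refine this.congr fun k => ?_
  rw [hypRatio, Fin.prod_univ_succ, Finset.prod_div_distrib]
  rw [mul_comm (b 0 + (k : ℝ)), ← div_div, div_eq_mul_inv _ (b 0 + (k : ℝ)), mul_comm]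

lemma exists_hypMoment_le (ha : ∀ i, 0 < a i) (hb : ∀ j, 0 < b j) :
    ∃ M, 0 ≤ M ∧ ∀ k, hypMoment a b k ≤ M ^ k := by
  obtain ⟨M, hM⟩ := (tendsto_hypRatio (a := a) (b := b)).bddAbove_range
  have hM' : ∀ k, hypRatio a b k ≤ M := fun k => hM ⟨k, rfl⟩
  have hM0 : 0 ≤ M := (hypRatio_pos ha hb 0).le.trans (hM' 0)
  refine ⟨M, hM0, fun k => ?_⟩
  induction k with
  | zero => simp [hypMoment_zero]
  | succ k ih =>
    rw [hypMoment_succ, pow_succ]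
    exact mul_le_mul ih (hM' k) (hypRatio_pos ha hb k).le (by positivity)

lemma pFq_eq_egf (z : ℝ) : pFq a b z = egf (hypMoment a b) z := by
  rw [pFq, egf]
  refine tsum_congr fun k => ?_
  rw [hypMoment, ← div_div]
  ring

end Coefficients

lemma radialPD_of_isRPD {H : ℝ → ℝ} (hH : ∀ n : ℕ, 1 ≤ n → IsRPD n (fun r => H (r ^ 2))) :
    RadialPD H := by
  intro κ ι _ _ _ t ξ
  set e := Fintype.equivFin κ
  set e' := Fintype.equivFin ι
  obtain ⟨c, hc, h⟩ := (hH (Fintype.card κ) Fintype.card_pos).2 (Fintype.card ι)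
    (fun i => WithLp.toLp 2 fun x => t (e'.symm i) (e.symm x)) (fun i => (ξ (e'.symm i) : ℂ))
  have hn : ∀ i j, ‖(WithLp.toLp 2 fun x => t (e'.symm i) (e.symm x) :
      EuclideanSpace ℝ (Fin (Fintype.card κ)))
      - (WithLp.toLp 2 fun x => t (e'.symm j) (e.symm x))‖ ^ 2
      = ∑ x, (t (e'.symm i) x - t (e'.symm j) x) ^ 2 := by
    intro i j
    rw [EuclideanSpace.norm_sq_eq, ← e.symm.sum_comp]
    simp
  simp only [hn, Complex.conj_ofReal] at h
  have h' : ∑ i, ∑ j, H (∑ x, (t (e'.symm i) x - t (e'.symm j) x) ^ 2)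
      * (ξ (e'.symm i) * ξ (e'.symm j)) = c := by
    simp only [← mul_assoc]
    exact_mod_cast h
  rw [← e'.symm.sum_comp]
  simp only [← e'.symm.sum_comp (fun j => H _ * (_ * ξ j))]
  rw [h']
  exact hc

/-- For any positive parameter vectors, the Bessel-type function
`r ↦ p-1Fp(a;b;-r²)` fails to be `n`-RPD for some dimension `n ≥ 1`; i.e. it never
belongs to `Φ_∞ = ∩_n Φ_n`. -/
theorem bessel_type_not_in_Phi_infty
    (p : ℕ) (a : Fin p → ℝ) (b : Fin (p + 1) → ℝ)
    (ha : ∀ i, 0 < a i) (hb : ∀ j, 0 < b j) :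
    ∃ n : ℕ, 1 ≤ n ∧ ¬ IsRPD n (fun r => pFq a b (-(r ^ 2))) := by
  by_contra! hcon
  set m := hypMoment a b with hm
  obtain ⟨M, hM0, hM⟩ := exists_hypMoment_le ha hb
  have hmpos : ∀ k, 0 < m k := hypMoment_pos ha hb
  set H : ℕ → ℝ → ℝ := fun k x => egf (fun j => m (k + j)) (-x) with hH
  have hd : ∀ k x, HasDerivAt (H k) (-H (k + 1) x) x := by
    intro k x
    have hb : ∀ j, |m (k + j)| ≤ M ^ k * M ^ j := fun j => by
      rw [abs_of_pos (hmpos _), ← pow_add]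
      exact hM _
    refine ((hasDerivAt_egf hb (-x)).comp x (hasDerivAt_neg x)).congr_deriv ?_
    simp only [hH, mul_neg, mul_one, add_assoc, add_comm 1]
  have h00 : ∀ k, H k 0 = m k := by
    intro k
    simp only [hH, neg_zero, egf_zero, add_zero]
  have hPD : ∀ k, RadialPD (H k) := by
    intro k
    induction k with
    | zero =>
      apply radialPD_of_isRPD
      simpa only [hH, zero_add, pFq_eq_egf] using hcon
    | succ k ih => exact ih.neg_deriv (hd k)
  have hlog : ∀ k, m (k + 1) ^ 2 ≤ m k * m (k + 2) := by
    intro k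
    have := sq_deriv_le (hd k) (hd (k + 1)) fun s hs =>
      (hPD k).sq_le (by rw [h00]; exact hmpos k) hs
    simpa only [h00] using this
  have hmono : Monotone (hypRatio a b) := by
    refine monotone_nat_of_le_succ fun k => ?_
    have h := hlog k
    rw [hm, hypMoment_succ (k + 1), sq, mul_left_comm, mul_comm] at h
    have h1 := le_of_mul_le_mul_right (by linarith :
      hypMoment a b (k + 1) * hypMoment a b (k + 1)
        ≤ (hypMoment a b k * hypRatio a b (k + 1)) * hypMoment a b (k + 1)) (hmpos (k + 1))
    rw [hypMoment_succ] at h1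
    exact le_of_mul_le_mul_left h1 (hmpos k)
  exact absurd (hmono.ge_of_tendsto tendsto_hypRatio 0) (not_le.2 (hypRatio_pos ha hb 0))
end

section
/- Let a = (a_1,…,a_p) and b = (b_1,…,b_p) be vectors of positive reals with v_{a,b}(t) ≥ 0 for all t ∈ (0,1]. Then for every integer n ≥ 1 the function r ↦ pFp(a;b;−r²) on [0,∞) is n-RPD (i.e. it belongs to Φ_∞). -/
open Filter Topology MeasureTheory ProbabilityTheory

/-! ### Shift and backward difference -/

/-- The shift `E`, `(E f) x = f (x + 1)`, on real functions on `A` (here `ℕ` or `ℝ`). -/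
def shiftOp (A : Type*) [Add A] [One A] : Module.End ℝ (A → ℝ) where
  toFun f := fun x => f (x + 1)
  map_add' _ _ := rfl
  map_smul' _ _ := rfl

/-- The backward difference `D = 1 - E`, `(D f) x = f x - f (x + 1)`. -/
def bdiff (A : Type*) [Add A] [One A] : Module.End ℝ (A → ℝ) := 1 - shiftOp A

lemma bdiff_pow_zero {A : Type*} [Add A] [One A] (f : A → ℝ) : (bdiff A ^ 0) f = f := rfl

lemma bdiff_pow_succ {A : Type*} [Add A] [One A] (n : ℕ) (f : A → ℝ) (x : A) :
    (bdiff A ^ (n + 1)) f x = (bdiff A ^ n) f x - (bdiff A ^ n) f (x + 1) := by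
  rw [pow_succ']; rfl

lemma bdiff_pow_succ' {A : Type*} [Add A] [One A] (n : ℕ) (f : A → ℝ) :
    (bdiff A ^ (n + 1)) f = (bdiff A ^ n) (fun x => f x - f (x + 1)) := by
  rw [pow_succ]; rfl

lemma bdiff_pow_shift {A : Type*} [Add A] [One A] (n : ℕ) (f : A → ℝ) (x : A) :
    (bdiff A ^ n) (fun y => f (y + 1)) x = (bdiff A ^ n) f (x + 1) := by
  induction n generalizing x with
  | zero => rfl
  | succ n ih => rw [bdiff_pow_succ, bdiff_pow_succ, ih, ih]

lemma shiftOp_pow_apply (j : ℕ) (f : ℕ → ℝ) (k : ℕ) : (shiftOp ℕ ^ j) f k = f (k + j) := by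
  induction j generalizing k with
  | zero => rfl
  | succ j ih =>
    rw [pow_succ']
    change (shiftOp ℕ ^ j) f (k + 1) = _
    rw [ih]; congr 1; ring

lemma bdiff_pow_natCast (n : ℕ) (f : ℝ → ℝ) (k : ℕ) :
    (bdiff ℕ ^ n) (fun j : ℕ => f j) k = (bdiff ℝ ^ n) f k := by
  induction n generalizing k with
  | zero => rfl
  | succ n ih => rw [bdiff_pow_succ, bdiff_pow_succ, ih, ih]; push_cast; rfl

lemma tendsto_bdiff_pow {F : ℕ → ℕ → ℝ} {f : ℕ → ℝ}
    (hF : ∀ k, Tendsto (fun N => F N k) atTop (𝓝 (f k))) (n k : ℕ) :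
    Tendsto (fun N => (bdiff ℕ ^ n) (F N) k) atTop (𝓝 ((bdiff ℕ ^ n) f k)) := by
  induction n generalizing k with
  | zero => exact hF k
  | succ n ih => simp only [bdiff_pow_succ]; exact (ih k).sub (ih (k + 1))

/-! ### Completely monotone sequences -/

/-- Complete monotonicity on the window `{0, …, K}`: only the differences `D^n f k` that involve
no index beyond `K` are required to be nonnegative. -/
def CMUpTo (K : ℕ) (f : ℕ → ℝ) : Prop := ∀ n k, n + k ≤ K → 0 ≤ (bdiff ℕ ^ n) f k

lemma CMUpTo.mono {K L : ℕ} {f : ℕ → ℝ} (h : CMUpTo K f) (hLK : L ≤ K) : CMUpTo L f :=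
  fun n k hk => h n k (hk.trans hLK)

lemma CMUpTo.mul {K : ℕ} {f g : ℕ → ℝ} (hf : CMUpTo K f) (hg : CMUpTo K g) :
    CMUpTo K (fun k => f k * g k) := by
  induction K generalizing f g with
  | zero =>
    intro n k h
    obtain rfl : n = 0 := by omega
    exact mul_nonneg (hf 0 k h) (hg 0 k h)
  | succ K ih =>
    have hD : ∀ {u : ℕ → ℝ}, CMUpTo (K + 1) u → CMUpTo K (fun k => u k - u (k + 1)) := by
      intro u hu n k h
      rw [← bdiff_pow_succ']
      exact hu _ _ (by omega)
    have hE : ∀ {u : ℕ → ℝ}, CMUpTo (K + 1) u → CMUpTo K (fun k => u (k + 1)) := by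
      intro u hu n k h
      rw [bdiff_pow_shift]
      exact hu _ _ (by omega)
    intro n k h
    cases n with
    | zero => exact mul_nonneg (hf 0 k h) (hg 0 k h)
    | succ n =>
      -- Discrete Leibniz rule: `D (f g) = (D f) g + (E f) (D g)`.
      have e : (fun k => f k * g k - f (k + 1) * g (k + 1)) =
          (fun k => (f k - f (k + 1)) * g k) + (fun k => f (k + 1) * (g k - g (k + 1))) := by
        funext k; simp only [Pi.add_apply]; ring
      rw [bdiff_pow_succ', e, map_add]
      exact add_nonneg (ih (hD hf) (hg.mono (by omega)) n k (by omega))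
        (ih (hE hf) (hD hg) n k (by omega))

lemma CMUpTo.one (K : ℕ) : CMUpTo K (fun _ => 1) := by
  intro n k _
  cases n with
  | zero => exact zero_le_one
  | succ n =>
    rw [bdiff_pow_succ']
    have e : (fun _ : ℕ => (1 : ℝ) - 1) = 0 := by funext; simp
    rw [e, map_zero]
    exact le_rfl

lemma CMUpTo.pow {K : ℕ} {f : ℕ → ℝ} (hf : CMUpTo K f) (N : ℕ) :
    CMUpTo K (fun k => f k ^ N) := by
  induction N with
  | zero => simpa using CMUpTo.one K
  | succ N ih => simpa only [pow_succ] using ih.mul hf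

/-- The discrete form of "`exp (-h)` is completely monotone when `h` is a Bernstein function". -/
lemma cm_exp_neg {g h : ℕ → ℝ} (hg : ∀ n k, 0 ≤ (bdiff ℕ ^ n) g k)
    (hh : ∀ k, h (k + 1) = h k + g k) (n k : ℕ) :
    0 ≤ (bdiff ℕ ^ n) (fun j => Real.exp (-h j)) k := by
  have hlim : ∀ j, Tendsto (fun N : ℕ => (1 + (-h j) / (N : ℝ)) ^ N) atTop
      (𝓝 (Real.exp (-h j))) := fun j => Real.tendsto_one_add_div_pow_exp _
  refine ge_of_tendsto (tendsto_bdiff_pow (F := fun N j => (1 + (-h j) / (N : ℝ)) ^ N) hlim n k) ?_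
  have hmono : Monotone h := monotone_nat_of_le_succ fun j => by
    rw [hh]; linarith [show 0 ≤ g j from hg 0 j]
  filter_upwards [(tendsto_natCast_atTop_atTop (R := ℝ)).eventually_ge_atTop (h (n + k)),
    eventually_gt_atTop 0] with N hN hN0
  have hN0' : (0 : ℝ) < N := by exact_mod_cast hN0
  refine CMUpTo.pow (K := n + k) (f := fun j => 1 + (-h j) / (N : ℝ)) ?_ N n k le_rfl
  intro i j hij
  cases i with
  | zero =>
    have : h j ≤ N := (hmono (by omega)).trans hN
    have : h j / N ≤ 1 := by rw [div_le_one hN0']; exact this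
    change 0 ≤ 1 + (-h j) / (N : ℝ)
    rw [neg_div]; linarith
  | succ i =>
    have e : (fun x => 1 + (-h x) / (N : ℝ) - (1 + (-h (x + 1)) / (N : ℝ))) =
        (N : ℝ)⁻¹ • g := by
      funext x; simp only [hh, Pi.smul_apply, smul_eq_mul]; ring
    rw [bdiff_pow_succ', e, map_smul]
    exact mul_nonneg (by positivity) (hg i j)

/-! ### Complete monotonicity of the logarithmic ratio -/

/-- `G x = log ∏ (b_i + x) / (a_i + x)`. -/
noncomputable def logRatio {p : ℕ} (a b : Fin p → ℝ) (x : ℝ) : ℝ :=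
  ∑ i, (Real.log (b i + x) - Real.log (a i + x))

/-- `∫₀¹ (1-t)^n t^(x-1) v(t) dt`, which is `-(D^n G)' x`. -/
noncomputable def vMoment {p : ℕ} (a b : Fin p → ℝ) (n : ℕ) (x : ℝ) : ℝ :=
  ∫ t in (0 : ℝ)..1, (1 - t) ^ n * ∑ i, (t ^ (a i + x - 1) - t ^ (b i + x - 1))

section
variable {p : ℕ} {a b : Fin p → ℝ}

lemma vMoment_integrable (ha : ∀ i, 0 < a i) (hb : ∀ i, 0 < b i) (n : ℕ) {x : ℝ} (hx : 0 ≤ x) :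
    IntervalIntegrable
      (fun t : ℝ => (1 - t) ^ n * ∑ i, (t ^ (a i + x - 1) - t ^ (b i + x - 1))) volume 0 1 := by
  apply IntervalIntegrable.continuousOn_mul
  · have := IntervalIntegrable.sum (μ := volume) (a := 0) (b := 1) Finset.univ
      (f := fun i (t : ℝ) => t ^ (a i + x - 1) - t ^ (b i + x - 1)) (fun i _ =>
        (intervalIntegral.intervalIntegrable_rpow' (by linarith [ha i])).sub
          (intervalIntegral.intervalIntegrable_rpow' (by linarith [hb i])))
    refine this.congr fun t _ => ?_
    simp
  · fun_prop

lemma vMoment_zero (ha : ∀ i, 0 < a i) (hb : ∀ i, 0 < b i) {x : ℝ} (hx : 0 ≤ x) :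
    vMoment a b 0 x = ∑ i, ((a i + x)⁻¹ - (b i + x)⁻¹) := by
  have hpow : ∀ c : ℝ, 0 < c → IntervalIntegrable (fun t : ℝ => t ^ (c + x - 1)) volume 0 1 :=
    fun c hc => intervalIntegral.intervalIntegrable_rpow' (by linarith)
  have hIntegral : ∀ c : ℝ, 0 < c → ∫ t in (0 : ℝ)..1, t ^ (c + x - 1) = (c + x)⁻¹ := by
    intro c hc
    rw [integral_rpow (Or.inl (by linarith)), Real.one_rpow, Real.zero_rpow (by linarith)]
    simp
  simp only [vMoment, pow_zero, one_mul]
  rw [intervalIntegral.integral_finsetSum fun i _ => (hpow _ (ha i)).sub (hpow _ (hb i))]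
  refine Finset.sum_congr rfl fun i _ => ?_
  rw [intervalIntegral.integral_sub (hpow _ (ha i)) (hpow _ (hb i)), hIntegral _ (ha i), hIntegral _ (hb i)]

lemma vMoment_succ (ha : ∀ i, 0 < a i) (hb : ∀ i, 0 < b i) (n : ℕ) {x : ℝ} (hx : 0 ≤ x) :
    vMoment a b (n + 1) x = vMoment a b n x - vMoment a b n (x + 1) := by
  unfold vMoment
  rw [← intervalIntegral.integral_sub (vMoment_integrable ha hb n hx)
    (vMoment_integrable ha hb n (by linarith))]
  refine intervalIntegral.integral_congr_ae (Eventually.of_forall fun t ht => ?_)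
  rw [Set.uIoc_of_le zero_le_one] at ht
  have h : ∀ c : ℝ, t ^ (c + (x + 1) - 1) = t * t ^ (c + x - 1) := by
    intro c
    rw [show c + (x + 1) - 1 = (c + x - 1) + 1 by ring, Real.rpow_add_one ht.1.ne', mul_comm]
  simp only [h, ← mul_sub, ← Finset.mul_sum]
  ring

lemma vMoment_nonneg (hv : ∀ t : ℝ, 0 < t → t ≤ 1 → 0 ≤ ∑ i, (t ^ a i - t ^ b i))
    (n : ℕ) (x : ℝ) : 0 ≤ vMoment a b n x := by
  unfold vMoment
  rw [intervalIntegral.integral_of_le zero_le_one]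
  refine setIntegral_nonneg measurableSet_Ioc fun t ht => ?_
  have h : ∀ c : ℝ, t ^ (c + x - 1) = t ^ (x - 1) * t ^ c := by
    intro c
    rw [← Real.rpow_add ht.1]; congr 1; ring
  simp only [h, ← mul_sub, ← Finset.mul_sum]
  exact mul_nonneg (pow_nonneg (by linarith [ht.2]) _)
    (mul_nonneg (Real.rpow_nonneg ht.1.le _) (hv t ht.1 ht.2))

lemma hasDerivAt_bdiff_logRatio (ha : ∀ i, 0 < a i) (hb : ∀ i, 0 < b i) (n : ℕ) {x : ℝ}
    (hx : 0 ≤ x) :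
    HasDerivAt ((bdiff ℝ ^ n) (logRatio a b)) (-vMoment a b n x) x := by
  induction n generalizing x with
  | zero =>
    rw [bdiff_pow_zero, vMoment_zero ha hb hx, ← Finset.sum_neg_distrib]
    unfold logRatio
    refine HasDerivAt.fun_sum fun i _ => ?_
    have h : ∀ c : ℝ, 0 < c → HasDerivAt (fun y => Real.log (c + y)) (c + x)⁻¹ x := by
      intro c hc
      simpa using ((hasDerivAt_id x).const_add c).log (by simp; linarith)
    simpa using (h _ (hb i)).fun_sub (h _ (ha i))
  | succ n ih =>
    rw [vMoment_succ ha hb n hx]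
    have e : (bdiff ℝ ^ (n + 1)) (logRatio a b) = fun y =>
        (bdiff ℝ ^ n) (logRatio a b) y - (bdiff ℝ ^ n) (logRatio a b) (y + 1) :=
      funext fun y => bdiff_pow_succ n _ y
    rw [e]
    exact ((ih hx).fun_sub ((ih (x := x + 1) (by linarith)).comp_add_const x 1)).congr_deriv
      (by ring)

lemma tendsto_bdiff_logRatio (n : ℕ) :
    Tendsto ((bdiff ℝ ^ n) (logRatio a b)) atTop (𝓝 0) := by
  induction n with
  | zero =>
    rw [bdiff_pow_zero]
    have h : ∀ i, Tendsto (fun x => Real.log (b i + x) - Real.log (a i + x)) atTop (𝓝 0) := by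
      intro i
      have := (Real.tendsto_log_comp_add_sub_log (b i)).sub
        (Real.tendsto_log_comp_add_sub_log (a i))
      rw [sub_zero] at this
      refine this.congr fun x => ?_
      rw [add_comm x, add_comm x]; ring
    have hsum := tendsto_finsetSum Finset.univ fun i _ => h i
    rw [Finset.sum_const_zero] at hsum
    exact hsum
  | succ n ih =>
    have := ih.sub (ih.comp (tendsto_atTop_add_const_right atTop (1 : ℝ) tendsto_id))
    rw [sub_zero] at this
    exact this.congr fun x => (bdiff_pow_succ n _ x).symm

/-- `D^n G` decreases to its limit `0`. -/
lemma bdiff_logRatio_nonneg (ha : ∀ i, 0 < a i) (hb : ∀ i, 0 < b i)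
    (hv : ∀ t : ℝ, 0 < t → t ≤ 1 → 0 ≤ ∑ i, (t ^ a i - t ^ b i)) (n : ℕ) {x : ℝ} (hx : 0 ≤ x) :
    0 ≤ (bdiff ℝ ^ n) (logRatio a b) x := by
  have hanti : AntitoneOn ((bdiff ℝ ^ n) (logRatio a b)) (Set.Ici 0) := by
    refine antitoneOn_of_deriv_nonpos (convex_Ici 0)
      (fun y hy => (hasDerivAt_bdiff_logRatio ha hb n hy).continuousAt.continuousWithinAt)
      (fun y hy => ?_) (fun y hy => ?_)
    · exact (hasDerivAt_bdiff_logRatio ha hb n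
        (interior_subset hy)).differentiableAt.differentiableWithinAt
    · rw [(hasDerivAt_bdiff_logRatio ha hb n (interior_subset hy)).deriv]
      linarith [vMoment_nonneg hv n y]
  refine le_of_tendsto (tendsto_bdiff_logRatio (a := a) (b := b) n) ?_
  filter_upwards [eventually_ge_atTop x] with y hy
  exact hanti hx (hx.trans hy) hy

end

/-! ### The coefficient sequence -/

/-- The coefficient `∏ (a_i)_k / ∏ (b_i)_k`. -/
noncomputable def coeffSeq {p : ℕ} (a b : Fin p → ℝ) (k : ℕ) : ℝ :=
  (∏ i, risingFactorial (a i) k) / ∏ i, risingFactorial (b i) k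

section
variable {p : ℕ} {a b : Fin p → ℝ}

lemma coeffSeq_zero : coeffSeq a b 0 = 1 := by simp [coeffSeq, risingFactorial]

lemma coeffSeq_eq_exp (ha : ∀ i, 0 < a i) (hb : ∀ i, 0 < b i) (k : ℕ) :
    coeffSeq a b k = Real.exp (-∑ j ∈ Finset.range k, logRatio a b j) := by
  induction k with
  | zero => simp [coeffSeq_zero]
  | succ k ih =>
    rw [Finset.sum_range_succ, neg_add, Real.exp_add, ← ih]
    have : Real.exp (-logRatio a b k) = (∏ i, (a i + k)) / ∏ i, (b i + k) := by
      rw [logRatio, ← Finset.sum_neg_distrib, Real.exp_sum, ← Finset.prod_div_distrib]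
      refine Finset.prod_congr rfl fun i _ => ?_
      have h1 : 0 < a i + k := by have := ha i; positivity
      have h2 : 0 < b i + k := by have := hb i; positivity
      rw [neg_sub, Real.exp_sub, Real.exp_log h1, Real.exp_log h2]
    rw [this]
    simp only [coeffSeq, risingFactorial, Finset.prod_range_succ, Finset.prod_mul_distrib]
    rw [mul_div_mul_comm]

lemma coeffSeq_cm (ha : ∀ i, 0 < a i) (hb : ∀ i, 0 < b i)
    (hv : ∀ t : ℝ, 0 < t → t ≤ 1 → 0 ≤ ∑ i, (t ^ a i - t ^ b i)) (n k : ℕ) :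
    0 ≤ (bdiff ℕ ^ n) (coeffSeq a b) k := by
  rw [funext (coeffSeq_eq_exp ha hb)]
  refine cm_exp_neg (g := fun j : ℕ => logRatio a b j) (fun n k => ?_)
    (fun k => Finset.sum_range_succ _ _) n k
  rw [bdiff_pow_natCast]
  exact bdiff_logRatio_nonneg ha hb hv n (Nat.cast_nonneg k)

end

/-! ### Hausdorff approximation -/

/-- The weight `C(N,j) (D^(N-j) m)(j)` of the atom `j/N` in the `N`-th approximation of the
measure on `[0,1]` with moments `m`. -/
noncomputable def hWeight (m : ℕ → ℝ) (N j : ℕ) : ℝ :=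
  (N.choose j : ℝ) * (bdiff ℕ ^ (N - j)) m j

/-- Both sides are `(D + yE)^N m` at `0`, expanded by the binomial theorem with `D + yE` written
either as such or as `1 + (y-1)E`. -/
lemma sum_hWeight_mul_pow (m : ℕ → ℝ) (N : ℕ) (y : ℝ) :
    ∑ j ∈ Finset.range (N + 1), hWeight m N j * y ^ j =
      ∑ k ∈ Finset.range (N + 1), (N.choose k : ℝ) * m k * (y - 1) ^ k := by
  have hc : Commute (y • shiftOp ℕ) (bdiff ℕ) := by
    refine Commute.smul_left ?_ y
    exact (Commute.one_right _).sub_right (Commute.refl _)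
  have hcast : ∀ (T : Module.End ℝ (ℕ → ℝ)) (c : ℕ), T * c = (c : ℝ) • T := fun T c => by
    rw [← nsmul_eq_mul', Nat.cast_smul_eq_nsmul]
  have h1 := hc.add_pow N
  have h2 := (Commute.one_right ((y - 1) • shiftOp ℕ)).add_pow N
  have e : y • shiftOp ℕ + bdiff ℕ = (y - 1) • shiftOp ℕ + 1 := by
    rw [bdiff]; module
  rw [e, h2] at h1
  have h3 := congrArg (fun T : Module.End ℝ (ℕ → ℝ) => T m 0) h1
  simp only [LinearMap.sum_apply, Finset.sum_apply, smul_pow, one_pow, mul_one, hcast] at h3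
  refine Eq.trans ?_ (h3.symm.trans ?_)
  · refine Finset.sum_congr rfl fun j _ => ?_
    simp only [smul_mul_assoc, LinearMap.smul_apply, Pi.smul_apply, Module.End.mul_apply,
      shiftOp_pow_apply, hWeight, smul_eq_mul, zero_add]
    ring
  · refine Finset.sum_congr rfl fun j _ => ?_
    simp only [LinearMap.smul_apply, Pi.smul_apply, shiftOp_pow_apply, smul_eq_mul, zero_add]
    ring

lemma sum_hWeight (m : ℕ → ℝ) (N : ℕ) :
    ∑ j ∈ Finset.range (N + 1), hWeight m N j = m 0 := by
  have := sum_hWeight_mul_pow m N 1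
  simp only [one_pow, mul_one, sub_self] at this
  rw [this, Finset.sum_range_succ']
  simp

lemma tendsto_choose_div_pow (k : ℕ) :
    Tendsto (fun N : ℕ => (N.choose k : ℝ) / (N : ℝ) ^ k) atTop (𝓝 (1 / (k.factorial : ℝ))) := by
  have h := isEquivalent_choose k
  have h0 : ∀ᶠ N : ℕ in atTop, ((N : ℝ) ^ k / (k.factorial : ℝ)) ≠ 0 := by
    filter_upwards [eventually_gt_atTop 0] with N hN
    positivity
  have h1 := (Asymptotics.isEquivalent_iff_tendsto_one h0).1 h
  have h2 := h1.mul_const (1 / (k.factorial : ℝ))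
  rw [one_mul] at h2
  refine h2.congr' ?_
  filter_upwards [eventually_gt_atTop 0] with N hN
  simp only [Pi.div_apply]
  field_simp

/-- Dominated convergence for `∑ C(N,k) m k (-z/N)^k`, with majorant `|z|^k / k!`. -/
lemma tendsto_binomial_sum {m : ℕ → ℝ} (hm : ∀ k, |m k| ≤ 1) (z : ℝ) :
    Tendsto (fun N : ℕ => ∑ k ∈ Finset.range (N + 1), (N.choose k : ℝ) * m k * (-z / N) ^ k)
      atTop (𝓝 (∑' k : ℕ, m k / (k.factorial : ℝ) * (-z) ^ k)) := by
  have e : ∀ N : ℕ, ∑ k ∈ Finset.range (N + 1), (N.choose k : ℝ) * m k * (-z / N) ^ k =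
      ∑' k : ℕ, (N.choose k : ℝ) * m k * (-z / N) ^ k := by
    intro N
    rw [tsum_eq_sum]
    intro k hk
    rw [Nat.choose_eq_zero_of_lt (by simpa using hk)]
    simp
  simp only [e]
  refine tendsto_tsum_of_dominated_convergence (bound := fun k => |z| ^ k / (k.factorial : ℝ))
    (Real.summable_pow_div_factorial _) (fun k => ?_) (Eventually.of_forall fun N k => ?_)
  · have := (tendsto_choose_div_pow k).mul_const (m k * (-z) ^ k)
    convert this using 2
    · rw [div_pow]; ring
    · ring
  · rw [Real.norm_eq_abs, abs_mul, abs_mul, abs_pow, abs_div, abs_neg, Nat.abs_cast, Nat.abs_cast]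
    have h1 : (N.choose k : ℝ) ≤ (N : ℝ) ^ k / (k.factorial : ℝ) := Nat.choose_le_pow_div k N
    have h2 : (N : ℝ) ^ k * (|z| / N) ^ k ≤ |z| ^ k := by
      rw [← mul_pow]
      refine pow_le_pow_left₀ (by positivity) ?_ _
      rcases eq_or_ne (N : ℝ) 0 with h | h
      · simp [h]
      · rw [mul_div_cancel₀ _ h]
    calc (N.choose k : ℝ) * |m k| * (|z| / N) ^ k
        ≤ (N : ℝ) ^ k / (k.factorial : ℝ) * 1 * (|z| / N) ^ k := by
          gcongr; exact hm k
      _ = (N : ℝ) ^ k * (|z| / N) ^ k / (k.factorial : ℝ) := by ring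
      _ ≤ _ := by gcongr

lemma exp_pow_sub_le {x : ℝ} (h0 : 0 ≤ x) (h1 : x ≤ 1) (j : ℕ) :
    |Real.exp (-x) ^ j - (1 - x) ^ j| ≤ j * x ^ 2 := by
  have ha : |Real.exp (-x)| ≤ 1 := by
    rw [Real.abs_exp]; exact Real.exp_le_one_iff.2 (by linarith)
  have hb : |1 - x| ≤ 1 := by rw [abs_le]; constructor <;> linarith
  have hd : |Real.exp (-x) - (1 - x)| ≤ x ^ 2 := by
    have := Real.abs_exp_sub_one_sub_id_le (x := -x) (by rw [abs_neg, abs_of_nonneg h0]; exact h1)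
    rw [neg_sq] at this
    convert this using 2; ring
  refine (abs_pow_sub_pow_le _ _ _).trans ?_
  have hmax : max |Real.exp (-x)| |1 - x| ^ (j - 1) ≤ 1 :=
    pow_le_one₀ (le_max_of_le_left (abs_nonneg _)) (max_le ha hb)
  calc |Real.exp (-x) - (1 - x)| * j * max |Real.exp (-x)| |1 - x| ^ (j - 1)
      ≤ x ^ 2 * j * 1 := by gcongr
    _ = j * x ^ 2 := by ring

lemma tendsto_gaussian_mixture {m : ℕ → ℝ} (hcm : ∀ n k, 0 ≤ (bdiff ℕ ^ n) m k) (h0 : m 0 = 1)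
    {z : ℝ} (hz : 0 ≤ z) :
    Tendsto (fun N : ℕ => ∑ j ∈ Finset.range (N + 1), hWeight m N j * Real.exp (-(j / N) * z))
      atTop (𝓝 (∑' k : ℕ, m k / (k.factorial : ℝ) * (-z) ^ k)) := by
  have hnn : ∀ k, 0 ≤ m k := fun k => hcm 0 k
  have hanti : Antitone m := antitone_nat_of_succ_le fun k => by
    have := hcm 1 k
    rw [bdiff_pow_succ, bdiff_pow_zero] at this
    linarith
  have hm : ∀ k, |m k| ≤ 1 := fun k => by
    rw [abs_of_nonneg (hnn k), ← h0]; exact hanti (Nat.zero_le k)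
  have hw : ∀ N j, 0 ≤ hWeight m N j := fun N j => mul_nonneg (Nat.cast_nonneg _) (hcm _ _)
  have hlim := tendsto_binomial_sum hm z
  have herr : Tendsto (fun N : ℕ =>
      (∑ j ∈ Finset.range (N + 1), hWeight m N j * Real.exp (-(j / N) * z)) -
        ∑ k ∈ Finset.range (N + 1), (N.choose k : ℝ) * m k * (-z / N) ^ k) atTop (𝓝 0) := by
    refine squeeze_zero_norm' (a := fun N : ℕ => z ^ 2 / N) ?_
      (tendsto_const_div_atTop_nhds_zero_nat _)
    filter_upwards [(tendsto_natCast_atTop_atTop (R := ℝ)).eventually_ge_atTop z,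
      eventually_gt_atTop 0] with N hN hN0
    have hN' : (0 : ℝ) < N := by exact_mod_cast hN0
    have e := sum_hWeight_mul_pow m N (1 - z / N)
    rw [show 1 - z / (N : ℝ) - 1 = -z / N by ring] at e
    rw [← e, ← Finset.sum_sub_distrib, Real.norm_eq_abs]
    calc |∑ j ∈ Finset.range (N + 1), (hWeight m N j * Real.exp (-(j / N) * z) -
            hWeight m N j * (1 - z / N) ^ j)|
        ≤ ∑ j ∈ Finset.range (N + 1), hWeight m N j * (z ^ 2 / N) := by
          refine (Finset.abs_sum_le_sum_abs _ _).trans (Finset.sum_le_sum fun j hj => ?_)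
          rw [← mul_sub, abs_mul, abs_of_nonneg (hw N j)]
          refine mul_le_mul_of_nonneg_left ?_ (hw N j)
          have hj' : (j : ℝ) ≤ N := by
            exact_mod_cast Nat.lt_succ_iff.1 (Finset.mem_range.1 hj)
          have := exp_pow_sub_le (x := z / N) (by positivity) ((div_le_one hN').2 hN) j
          rw [← Real.exp_nat_mul, show (j : ℝ) * -(z / N) = -(j / N) * z by ring] at this
          refine this.trans ?_
          calc (j : ℝ) * (z / N) ^ 2 ≤ N * (z / N) ^ 2 := by gcongr
            _ = z ^ 2 / N := by field_simp
      _ = z ^ 2 / N := by rw [← Finset.sum_mul, sum_hWeight, h0, one_mul]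
  simpa using herr.add hlim

/-! ### Positive definiteness -/

/-- `exp (-s ‖x‖²)` is the characteristic function of the standard Gaussian at `√(2s) x`, so the
Hermitian sum is `∫ |∑ ξ_i exp (i √(2s) ⟪x, t_i⟫)|² dγ(x)`. -/
lemma gaussian_posDef {n m : ℕ} (t : Fin m → EuclideanSpace ℝ (Fin n)) (ξ : Fin m → ℂ)
    {s : ℝ} (hs : 0 ≤ s) :
    ∃ c : ℝ, 0 ≤ c ∧ (∑ i, ∑ j, ((Real.exp (-s * ‖t i - t j‖ ^ 2) : ℝ) : ℂ) * ξ i *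
      (starRingEnd ℂ) (ξ j)) = (c : ℂ) := by
  set γ := stdGaussian (EuclideanSpace ℝ (Fin n))
  set σ : ℝ := √(2 * s)
  let e : Fin m → EuclideanSpace ℝ (Fin n) → ℂ := fun i x =>
    Complex.exp (inner ℝ x (σ • t i) * Complex.I)
  have hchar : ∀ i j, ((Real.exp (-s * ‖t i - t j‖ ^ 2) : ℝ) : ℂ) =
      ∫ x, e i x * (starRingEnd ℂ) (e j x) ∂γ := by
    intro i j
    have h := charFun_stdGaussian (σ • (t i - t j))
    rw [charFun_apply] at h
    have e1 : ∀ x, e i x * (starRingEnd ℂ) (e j x) =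
        Complex.exp (inner ℝ x (σ • (t i - t j)) * Complex.I) := by
      intro x
      simp only [e, ← Complex.exp_conj, map_mul, Complex.conj_ofReal, Complex.conj_I,
        ← Complex.exp_add, smul_sub, inner_sub_right]
      congr 1; push_cast; ring
    simp only [e1]
    rw [h, norm_smul, Complex.ofReal_exp]
    congr 1
    have hσ : σ ^ 2 = 2 * s := Real.sq_sqrt (by positivity)
    have : (‖σ‖ * ‖t i - t j‖) ^ 2 = 2 * s * ‖t i - t j‖ ^ 2 := by
      rw [mul_pow, Real.norm_eq_abs, sq_abs, hσ]
    rw [← Complex.ofReal_pow, this]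
    push_cast; ring
  have hcont : ∀ i, Continuous (e i) := fun i => by fun_prop
  have hnorm : ∀ i x, ‖e i x‖ = 1 := fun i x => Complex.norm_exp_ofReal_mul_I _
  have hIntegral : ∀ i j, Integrable (fun x => e i x * (starRingEnd ℂ) (e j x) * ξ i *
      (starRingEnd ℂ) (ξ j)) γ := by
    intro i j
    refine ((Integrable.of_bound (C := 1) ?_ (Eventually.of_forall fun x => ?_)).mul_const
      _).mul_const _
    · exact ((hcont i).mul (Complex.continuous_conj.comp (hcont j))).aestronglyMeasurable
    · rw [norm_mul, RCLike.norm_conj, hnorm, hnorm, one_mul]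
  refine ⟨∫ x, ‖∑ i, e i x * ξ i‖ ^ 2 ∂γ, integral_nonneg fun x => by positivity, ?_⟩
  rw [← integral_complex_ofReal]
  have e2 : ∀ x, ((‖∑ i, e i x * ξ i‖ ^ 2 : ℝ) : ℂ) = ∑ i, ∑ j,
      e i x * (starRingEnd ℂ) (e j x) * ξ i * (starRingEnd ℂ) (ξ j) := by
    intro x
    rw [Complex.ofReal_pow, ← Complex.mul_conj', map_sum, Finset.sum_mul_sum]
    refine Finset.sum_congr rfl fun i _ => Finset.sum_congr rfl fun j _ => ?_
    rw [map_mul]; ring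
  simp only [e2]
  rw [integral_finsetSum _ fun i _ => integrable_finsetSum _ fun j _ => hIntegral i j]
  refine Finset.sum_congr rfl fun i _ => ?_
  rw [integral_finsetSum _ fun j _ => hIntegral i j]
  refine Finset.sum_congr rfl fun j _ => ?_
  rw [integral_mul_const, integral_mul_const, hchar]

/-- Nonnegative reals are closed in `ℂ`. -/
lemma exists_nonneg_of_tendsto {S : ℕ → ℂ} {s : ℂ} (hS : ∀ N, ∃ c : ℝ, 0 ≤ c ∧ S N = c)
    (h : Tendsto S atTop (𝓝 s)) : ∃ c : ℝ, 0 ≤ c ∧ s = c := by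
  have hcl : IsClosed ((fun c : ℝ => (c : ℂ)) '' Set.Ici 0) :=
    Complex.isometry_ofReal.isClosedEmbedding.isClosedMap _ isClosed_Ici
  obtain ⟨c, hc, rfl⟩ := hcl.mem_of_tendsto h (Eventually.of_forall fun N => by
    obtain ⟨c, hc, e⟩ := hS N
    exact ⟨c, hc, e.symm⟩)
  exact ⟨c, hc, rfl⟩

lemma continuous_expSeries {m : ℕ → ℝ} (hm : ∀ k, |m k| ≤ 1) :
    Continuous (fun z : ℝ => ∑' k : ℕ, m k / (k.factorial : ℝ) * z ^ k) := by
  rw [continuous_iff_continuousAt]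
  intro x
  have : ContinuousOn (fun z : ℝ => ∑' k : ℕ, m k / (k.factorial : ℝ) * z ^ k)
      (Metric.ball 0 (|x| + 1)) := by
    have hsum : Summable fun k : ℕ => (|x| + 1) ^ k / (k.factorial : ℝ) :=
      Real.summable_pow_div_factorial _
    refine continuousOn_tsum (f := fun (k : ℕ) (z : ℝ) => m k / (k.factorial : ℝ) * z ^ k)
      (fun k => (continuous_const.mul (continuous_pow k)).continuousOn) hsum ?_
    intro k y hy
    have hy' : |y| ≤ |x| + 1 := by simpa using (Metric.mem_ball.1 hy).le
    rw [Real.norm_eq_abs, abs_mul, abs_div, abs_pow, Nat.abs_cast]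
    calc |m k| / (k.factorial : ℝ) * |y| ^ k ≤ 1 / (k.factorial : ℝ) * (|x| + 1) ^ k := by
          gcongr; exact hm k
      _ = _ := by ring
  exact this.continuousAt (Metric.isOpen_ball.mem_nhds (by simp))

/-- If `a, b` are positive vectors of the same length with
`v_{a,b}(t) ≥ 0` on `(0,1]`, then the Kummer-type function `r ↦ pFp(a;b;-r²)` is
radial positive definite in every dimension `n ≥ 1` (i.e. belongs to `Φ_∞`). -/
theorem kummer_type_in_Phi_infty
    (p : ℕ) (a b : Fin p → ℝ)
    (ha : ∀ i, 0 < a i) (hb : ∀ i, 0 < b i)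
    (hv : ∀ t : ℝ, 0 < t → t ≤ 1 → 0 ≤ ∑ i, (t ^ a i - t ^ b i)) :
    ∀ n : ℕ, 1 ≤ n → IsRPD n (fun r => pFq a b (-(r ^ 2))) := by
  intro n _
  have hcm := coeffSeq_cm ha hb hv
  have hF : ∀ z, pFq a b z = ∑' k : ℕ, coeffSeq a b k / (k.factorial : ℝ) * z ^ k := by
    intro z
    simp only [pFq, coeffSeq, div_div]
  have hanti : Antitone (coeffSeq a b) := antitone_nat_of_succ_le fun k => by
    have := hcm 1 k
    rw [bdiff_pow_succ, bdiff_pow_zero] at this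
    linarith
  have hm : ∀ k, |coeffSeq a b k| ≤ 1 := fun k => by
    rw [abs_of_nonneg (show 0 ≤ coeffSeq a b k from hcm 0 k), ← coeffSeq_zero (a := a) (b := b)]
    exact hanti (Nat.zero_le k)
  refine ⟨?_, fun m t ξ => ?_⟩
  · simp only [hF]
    exact ((continuous_expSeries hm).comp (by fun_prop : Continuous fun r : ℝ => -(r ^ 2))
      ).continuousOn
  · refine exists_nonneg_of_tendsto (S := fun N => ∑ i, ∑ j,
      ((∑ l ∈ Finset.range (N + 1), hWeight (coeffSeq a b) N l *
        Real.exp (-(l / N) * ‖t i - t j‖ ^ 2) : ℝ) : ℂ) * ξ i * (starRingEnd ℂ) (ξ j))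
      (fun N => ?_) ?_
    · choose c hc0 hc using fun l : ℕ => gaussian_posDef t ξ (s := (l / N : ℝ)) (by positivity)
      refine ⟨∑ l ∈ Finset.range (N + 1), hWeight (coeffSeq a b) N l * c l,
        Finset.sum_nonneg fun l _ =>
          mul_nonneg (mul_nonneg (Nat.cast_nonneg _) (hcm _ _)) (hc0 l), ?_⟩
      push_cast
      simp only [← hc, Finset.mul_sum, Finset.sum_mul]
      rw [Finset.sum_comm' (t' := Finset.univ) (s' := fun _ => Finset.range (N + 1)) (by simp)]
      refine Finset.sum_congr rfl fun i _ => ?_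
      rw [Finset.sum_comm]
      refine Finset.sum_congr rfl fun j _ => Finset.sum_congr rfl fun l _ => ?_
      push_cast; ring
    · refine tendsto_finsetSum _ fun i _ => tendsto_finsetSum _ fun j _ => ?_
      refine Tendsto.mul_const _ (Tendsto.mul_const _ ?_)
      simp only [hF]
      exact (Complex.continuous_ofReal.tendsto _).comp
        (tendsto_gaussian_mixture hcm coeffSeq_zero (by positivity))
end

section
/- Let σ > 0, and let a = (a_1,…,a_p), b = (b_1,…,b_p) be vectors of positive reals with v_{a,b}(t) ≥ 0 for all t ∈ (0,1]. Let f : [0,∞) → ℝ be continuous, real-analytic on (0,∞), and satisfy f(r) = ∑_{k=0}^∞ (σ)_k (a_1)_k⋯(a_p)_k (−r²)^k / ((b_1)_k⋯(b_p)_k · k!) for all 0 ≤ r < 1 (this series converges for |r| < 1). Then for every integer n ≥ 1 the function f is n-RPD (i.e. f belongs to Φ_∞). -/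
open Polynomial Filter Topology Set

/-! ### Moment sequences on `[0,1]` -/

/-- The linear functional on real polynomials sending `X ^ k` to `m k`. If `m` is the moment
sequence of a measure `μ`, this is integration against `μ`. -/
noncomputable def momentFunctional (m : ℕ → ℝ) : ℝ[X] →ₗ[ℝ] ℝ :=
  Polynomial.lsum fun k => m k • LinearMap.id

/-- Hausdorff moment sequences on `[0,1]`, described by positivity of the associated functional on
polynomials that are nonnegative on `[0,1]` rather than by a representing measure. -/
def IsMomentSeq (m : ℕ → ℝ) : Prop :=
  ∀ P : ℝ[X], (∀ t ∈ Icc (0 : ℝ) 1, 0 ≤ P.eval t) → 0 ≤ momentFunctional m P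

lemma momentFunctional_eq_sum (m : ℕ → ℝ) (P : ℝ[X]) :
    momentFunctional m P = ∑ k ∈ Finset.range (P.natDegree + 1), P.coeff k * m k := by
  rw [momentFunctional, Polynomial.lsum_apply, Polynomial.sum_over_range]
  · simp [mul_comm]
  · simp

lemma momentFunctional_eq_sum_of_lt (m : ℕ → ℝ) (P : ℝ[X]) {N : ℕ} (hN : P.natDegree < N) :
    momentFunctional m P = ∑ k ∈ Finset.range N, P.coeff k * m k := by
  rw [momentFunctional, Polynomial.lsum_apply, Polynomial.sum_over_range' _ _ N hN]
  · simp [mul_comm]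
  · simp

lemma momentFunctional_C_mul_X_pow (m : ℕ → ℝ) (c : ℝ) (k : ℕ) :
    momentFunctional m (C c * X ^ k) = c * m k := by
  rw [momentFunctional, Polynomial.lsum_apply, Polynomial.C_mul_X_pow_eq_monomial,
    Polynomial.sum_monomial_index]
  · simp [mul_comm]
  · simp

lemma momentFunctional_C_mul (m : ℕ → ℝ) (c : ℝ) (P : ℝ[X]) :
    momentFunctional m (C c * P) = c * momentFunctional m P := by
  rw [← Polynomial.smul_eq_C_mul, map_smul, smul_eq_mul]

namespace IsMomentSeq

variable {m m' : ℕ → ℝ}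

lemma of_tendsto {u : ℕ → ℕ → ℝ} (hu : ∀ N, IsMomentSeq (u N))
    (h : ∀ k, Tendsto (fun N => u N k) atTop (𝓝 (m k))) : IsMomentSeq m := by
  intro P hP
  have : Tendsto (fun N => momentFunctional (u N) P) atTop (𝓝 (momentFunctional m P)) := by
    simp only [momentFunctional_eq_sum]
    exact tendsto_finsetSum _ fun k _ => (h k).const_mul _
  exact ge_of_tendsto' this fun N => hu N P hP

lemma const {c : ℝ} (hc : 0 ≤ c) : IsMomentSeq fun _ => c := by
  intro P hP
  have h1 := hP 1 (by simp)
  rw [momentFunctional_eq_sum, ← Finset.sum_mul]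
  rw [Polynomial.eval_eq_sum_range] at h1
  simp only [one_pow, mul_one] at h1
  positivity

lemma add (h : IsMomentSeq m) (h' : IsMomentSeq m') : IsMomentSeq fun k => m k + m' k := by
  intro P hP
  have := add_nonneg (h P hP) (h' P hP)
  simpa only [momentFunctional_eq_sum, ← Finset.sum_add_distrib, ← mul_add] using this

/-- For fixed `s ∈ [0,1]` the polynomial `P (s t)` in `t` is nonnegative on `[0,1]`, so applying
the functional of `m'` in `t` yields a polynomial in `s` that is nonnegative on `[0,1]`. This is
multiplicative convolution of measures. -/
lemma mul (h : IsMomentSeq m) (h' : IsMomentSeq m') : IsMomentSeq fun k => m k * m' k := by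
  intro P hP
  set N := P.natDegree + 1
  set Q : ℝ[X] := ∑ k ∈ Finset.range N, C (P.coeff k * m' k) * X ^ k with hQ
  have hQm : momentFunctional m Q = momentFunctional (fun k => m k * m' k) P := by
    rw [hQ, map_sum, momentFunctional_eq_sum]
    refine Finset.sum_congr rfl fun k _ => ?_
    rw [momentFunctional_C_mul_X_pow]; ring
  rw [← hQm]
  refine h Q fun s hs => ?_
  have : Q.eval s = momentFunctional m' (P.comp (C s * X)) := by
    have hd : (P.comp (C s * X)).natDegree < N := by
      refine Nat.lt_succ_of_le (natDegree_comp_le.trans ?_)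
      exact (Nat.mul_le_mul_left _ ((natDegree_C_mul_le _ _).trans natDegree_X_le)).trans (by simp)
    rw [momentFunctional_eq_sum_of_lt _ _ hd, hQ, Polynomial.eval_finsetSum]
    refine Finset.sum_congr rfl fun k _ => ?_
    rw [Polynomial.comp_C_mul_X_coeff]
    simp; ring
  rw [this]
  refine h' _ fun t ht => ?_
  simp only [eval_comp, eval_mul, eval_C, eval_X]
  exact hP _ ⟨mul_nonneg hs.1 ht.1, mul_le_one₀ hs.2 ht.1 ht.2⟩

lemma pow (h : IsMomentSeq m) (n : ℕ) : IsMomentSeq fun k => m k ^ n := by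
  induction n with
  | zero => simpa using const (c := 1) zero_le_one
  | succ n ih => simpa only [pow_succ] using ih.mul h

lemma prod {u : ℕ → ℕ → ℝ} (hu : ∀ i, IsMomentSeq (u i)) (N : ℕ) :
    IsMomentSeq fun k => ∏ i ∈ Finset.range N, u i k := by
  induction N with
  | zero => simpa using const (c := 1) zero_le_one
  | succ n ih => simpa only [Finset.prod_range_succ] using ih.mul (hu n)

lemma sum {u : ℕ → ℕ → ℝ} (hu : ∀ i, IsMomentSeq (u i)) (N : ℕ) :
    IsMomentSeq fun k => ∑ i ∈ Finset.range N, u i k := by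
  induction N with
  | zero => simpa using const (c := 0) le_rfl
  | succ n ih => simpa only [Finset.sum_range_succ] using ih.add (hu n)

lemma exp (h : IsMomentSeq m) : IsMomentSeq fun k => Real.exp (m k) := by
  refine of_tendsto (u := fun N k => ∑ i ∈ Finset.range N, ((i.factorial : ℝ)⁻¹ * m k ^ i))
    (fun N => sum (fun i => (const (by positivity)).mul (h.pow i)) N) fun k => ?_
  have := (NormedSpace.exp_series_hasSum_exp' (𝕂 := ℝ) (m k)).tendsto_sum_nat
  rw [← Real.exp_eq_exp_ℝ] at this
  simpa using this

end IsMomentSeq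

/-! ### Ratios of Pochhammer symbols form a moment sequence -/

/-- The derivative in `u` of the functional applied to the sequence
`k ↦ ∑ j, (log (b j + u + k) - log (a j + u + k))` is `-∫ P(t) t^(u-1) v(t)` over `[0,1]`, hence
nonpositive. As that quantity tends to `0` for `u → ∞`, it is nonnegative at `u = 0`. -/
lemma isMomentSeq_log {p : ℕ} {a b : Fin p → ℝ} (ha : ∀ i, 0 < a i) (hb : ∀ i, 0 < b i)
    (hv : ∀ t : ℝ, 0 < t → t ≤ 1 → 0 ≤ ∑ i, (t ^ a i - t ^ b i)) :
    IsMomentSeq fun k => ∑ j, (Real.log (b j + k) - Real.log (a j + k)) := by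
  intro P hP
  set N := P.natDegree + 1 with hN
  let G : ℝ → ℝ := fun u => ∑ k ∈ Finset.range N, P.coeff k *
    ∑ j, (Real.log (u + (b j + k)) - Real.log (u + (a j + k)))
  let G' : ℝ → ℝ := fun u => ∑ k ∈ Finset.range N, P.coeff k *
    ∑ j, ((u + (b j + k))⁻¹ - (u + (a j + k))⁻¹)
  have hpos : ∀ (c : ℝ) (_ : 0 < c) (u : ℝ) (_ : 0 ≤ u) (k : ℕ), 0 < u + (c + k) := by
    intro c hc u hu k; positivity
  have hG : ∀ u, 0 ≤ u → HasDerivAt G (G' u) u := by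
    intro u hu
    refine HasDerivAt.fun_sum fun k _ => HasDerivAt.const_mul _ (HasDerivAt.fun_sum fun j _ => ?_)
    refine HasDerivAt.sub ?_ ?_
    · simpa using ((hasDerivAt_id u).add_const (b j + k)).log (hpos _ (hb j) u hu k).ne'
    · simpa using ((hasDerivAt_id u).add_const (a j + k)).log (hpos _ (ha j) u hu k).ne'
  have hint : ∀ c : ℝ, 0 < c → ∫ t in (0 : ℝ)..1, t ^ (c - 1) = c⁻¹ := by
    intro c hc
    rw [integral_rpow (Or.inl (by linarith))]
    simp [hc.ne', Real.zero_rpow]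
  have hii : ∀ c : ℝ, 0 < c → IntervalIntegrable (fun t : ℝ => t ^ (c - 1))
      MeasureTheory.volume 0 1 :=
    fun c hc => intervalIntegral.intervalIntegrable_rpow' (by linarith)
  have hG' : ∀ u, 0 ≤ u → G' u ≤ 0 := by
    intro u hu
    have h1 : -G' u = ∫ t in (0 : ℝ)..1, ∑ k ∈ Finset.range N, P.coeff k *
        ∑ j, (t ^ ((u + (a j + k)) - 1) - t ^ ((u + (b j + k)) - 1)) := by
      rw [intervalIntegral.integral_finsetSum]
      · rw [← Finset.sum_neg_distrib]
        refine Finset.sum_congr rfl fun k _ => ?_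
        rw [intervalIntegral.integral_const_mul, intervalIntegral.integral_finsetSum]
        · rw [← mul_neg, ← Finset.sum_neg_distrib]
          congr 1
          refine Finset.sum_congr rfl fun j _ => ?_
          rw [intervalIntegral.integral_sub (hii _ (hpos _ (ha j) u hu k))
            (hii _ (hpos _ (hb j) u hu k)), hint _ (hpos _ (ha j) u hu k),
            hint _ (hpos _ (hb j) u hu k)]
          ring
        · exact fun j _ => (hii _ (hpos _ (ha j) u hu k)).sub (hii _ (hpos _ (hb j) u hu k))
      · refine fun k _ => IntervalIntegrable.const_mul ?_ _
        have e : (fun t : ℝ => ∑ j, (t ^ ((u + (a j + k)) - 1) - t ^ ((u + (b j + k)) - 1))) =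
            ∑ j, fun t : ℝ => t ^ ((u + (a j + k)) - 1) - t ^ ((u + (b j + k)) - 1) := by
          ext t; simp
        rw [e]
        exact IntervalIntegrable.sum Finset.univ
          (fun j _ => (hii _ (hpos _ (ha j) u hu k)).sub (hii _ (hpos _ (hb j) u hu k)))
    rw [← neg_nonneg, h1, intervalIntegral.integral_of_le zero_le_one]
    refine MeasureTheory.setIntegral_nonneg measurableSet_Ioc fun t ht => ?_
    have h2 : ∀ (c : ℝ) (k : ℕ), t ^ ((u + (c + k)) - 1) = t ^ (u - 1) * t ^ k * t ^ c := by
      intro c k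
      rw [← Real.rpow_natCast, ← Real.rpow_add ht.1, ← Real.rpow_add ht.1]
      ring_nf
    have h3 : ∑ k ∈ Finset.range N, P.coeff k *
        ∑ j, (t ^ ((u + (a j + k)) - 1) - t ^ ((u + (b j + k)) - 1)) =
        P.eval t * (t ^ (u - 1) * ∑ j, (t ^ a j - t ^ b j)) := by
      rw [Polynomial.eval_eq_sum_range, Finset.sum_mul]
      refine Finset.sum_congr rfl fun k _ => ?_
      simp only [h2, ← mul_sub, ← Finset.mul_sum]
      ring
    rw [h3]
    exact mul_nonneg (hP t ⟨ht.1.le, ht.2⟩)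
      (mul_nonneg (Real.rpow_nonneg ht.1.le _) (hv t ht.1 ht.2))
  have hanti : AntitoneOn G (Ici 0) := by
    refine antitoneOn_of_deriv_nonpos (convex_Ici 0)
      (fun u hu => (hG u hu).continuousAt.continuousWithinAt) ?_ ?_
    · intro u hu
      rw [interior_Ici] at hu
      exact (hG u (le_of_lt hu)).differentiableAt.differentiableWithinAt
    · intro u hu
      rw [interior_Ici] at hu
      rw [(hG u (le_of_lt hu)).deriv]
      exact hG' u (le_of_lt hu)
  have hlim : Tendsto G atTop (𝓝 0) := by
    have : Tendsto G atTop (𝓝 (∑ k ∈ Finset.range N, P.coeff k * ∑ j : Fin p, ((0 : ℝ) - 0))) := by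
      refine tendsto_finsetSum _ fun k _ => Tendsto.const_mul _ (tendsto_finsetSum _ fun j _ => ?_)
      have := (Real.tendsto_log_comp_add_sub_log (b j + k)).sub
        (Real.tendsto_log_comp_add_sub_log (a j + k))
      simpa using this
    simpa using this
  have h0 : 0 ≤ G 0 := by
    refine le_of_tendsto hlim ?_
    filter_upwards [eventually_ge_atTop 0] with u hu
    exact hanti (by simp) hu hu
  rw [momentFunctional_eq_sum]
  simpa [G] using h0

lemma risingFactorial_pos {x : ℝ} (hx : 0 < x) (k : ℕ) : 0 < risingFactorial x k :=
  Finset.prod_pos fun i _ => by positivity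

/-- With `R i = ∏ j, (a j + i) / (b j + i)`, the sequence in question is
`k ↦ ∏ i < k, R i`. It is the limit in `N` of
`k ↦ (∏ i < N, R i) * ∏ i < N, (R (i + k))⁻¹`, where each `k ↦ (R (i + k))⁻¹` is the exponential
of a moment sequence. -/
lemma isMomentSeq_pochhammer {p : ℕ} {a b : Fin p → ℝ} (ha : ∀ i, 0 < a i) (hb : ∀ i, 0 < b i)
    (hv : ∀ t : ℝ, 0 < t → t ≤ 1 → 0 ≤ ∑ i, (t ^ a i - t ^ b i)) :
    IsMomentSeq fun k => (∏ j, risingFactorial (a j) k) / ∏ j, risingFactorial (b j) k := by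
  let R : ℕ → ℝ := fun i => ∏ j, ((a j + i) / (b j + i))
  have hR : ∀ i, 0 < R i := fun i => Finset.prod_pos fun j _ => by
    have := ha j; have := hb j; positivity
  have hm : ∀ k, (∏ j, risingFactorial (a j) k) / ∏ j, risingFactorial (b j) k =
      ∏ i ∈ Finset.range k, R i := by
    intro k
    simp only [R, risingFactorial]
    rw [Finset.prod_comm (s := Finset.range k), ← Finset.prod_div_distrib]
    simp only [Finset.prod_div_distrib]
  simp only [hm]
  have hRinv : ∀ i : ℕ, IsMomentSeq fun k => (R (k + i))⁻¹ := by
    intro i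
    have := (isMomentSeq_log (a := fun j => a j + i) (b := fun j => b j + i)
      (fun j => by have := ha j; positivity) (fun j => by have := hb j; positivity) (by
        intro t ht ht1
        have : ∀ j, t ^ (a j + i) - t ^ (b j + i) = (t ^ a j - t ^ b j) * t ^ (i : ℝ) := by
          intro j; rw [Real.rpow_add ht, Real.rpow_add ht]; ring
        simp only [this, ← Finset.sum_mul]
        exact mul_nonneg (hv t ht ht1) (Real.rpow_nonneg ht.le _))).exp
    convert this using 2 with k
    rw [Real.exp_sum, ← Finset.prod_inv_distrib]
    refine Finset.prod_congr rfl fun j _ => ?_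
    have h1 := ha j
    have h2 := hb j
    rw [Real.exp_sub, Real.exp_log (by positivity), Real.exp_log (by positivity), inv_div]
    push_cast
    ring_nf
  refine IsMomentSeq.of_tendsto (u := fun N k => (∏ i ∈ Finset.range N, R i) *
      ∏ i ∈ Finset.range N, (R (k + i))⁻¹)
    (fun N => (IsMomentSeq.const (Finset.prod_nonneg fun i _ => (hR i).le)).mul
      (IsMomentSeq.prod hRinv N)) fun k => ?_
  have hR1 : Tendsto R atTop (𝓝 1) := by
    have : Tendsto R atTop (𝓝 (∏ j : Fin p, (1 : ℝ))) := by
      refine tendsto_finsetProd _ fun j _ => ?_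
      have h0 : Tendsto (fun i : ℕ => (i : ℝ) + b j) atTop atTop :=
        tendsto_atTop_add_const_right _ _ tendsto_natCast_atTop_atTop
      have h1 : Tendsto (fun i : ℕ => 1 + (a j - b j) / ((i : ℝ) + b j)) atTop (𝓝 (1 + 0)) :=
        tendsto_const_nhds.add (h0.const_div_atTop _)
      rw [add_zero] at h1
      refine h1.congr fun i => ?_
      have h2 := hb j
      field_simp
      ring
    simpa using this
  have key : ∀ N, (∏ i ∈ Finset.range N, R i) * ∏ i ∈ Finset.range N, (R (k + i))⁻¹ =
      (∏ i ∈ Finset.range k, R i) * ∏ i ∈ Finset.range k, (R (N + i))⁻¹ := by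
    intro N
    have h1 := Finset.prod_range_add R k N
    have h2 := Finset.prod_range_add R N k
    rw [add_comm, h1] at h2
    have p1 : 0 < ∏ i ∈ Finset.range N, R (k + i) := Finset.prod_pos fun i _ => hR _
    have p2 : 0 < ∏ i ∈ Finset.range k, R (N + i) := Finset.prod_pos fun i _ => hR _
    rw [Finset.prod_inv_distrib, Finset.prod_inv_distrib, ← div_eq_mul_inv, ← div_eq_mul_inv,
      div_eq_div_iff p1.ne' p2.ne', h2]
  simp only [key]
  have : Tendsto (fun N => (∏ i ∈ Finset.range k, R i) * ∏ i ∈ Finset.range k, (R (N + i))⁻¹)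
      atTop (𝓝 ((∏ i ∈ Finset.range k, R i) * ∏ i ∈ Finset.range k, (1 : ℝ)⁻¹)) := by
    refine Tendsto.const_mul _ (tendsto_finsetProd _ fun i _ => ?_)
    exact (hR1.comp (tendsto_add_atTop_nat i)).inv₀ one_ne_zero
  simpa using this

/-! ### Normally convergent series under a moment functional -/

lemma IsMomentSeq.abs_momentFunctional_le {m : ℕ → ℝ} (h : IsMomentSeq m) {P : ℝ[X]} {c : ℝ}
    (hP : ∀ t ∈ Icc (0 : ℝ) 1, |P.eval t| ≤ c) : |momentFunctional m P| ≤ c * m 0 := by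
  have h0 : momentFunctional m (C c) = c * m 0 := by
    simpa using momentFunctional_C_mul_X_pow m c 0
  rw [abs_le]
  constructor
  · have := h (C c + P) fun t ht => by
      rw [eval_add, eval_C]; linarith [(abs_le.mp (hP t ht)).1]
    rw [map_add, h0] at this
    linarith
  · have := h (C c - P) fun t ht => by
      rw [eval_sub, eval_C]; linarith [(abs_le.mp (hP t ht)).2]
    rw [map_sub, h0] at this
    linarith

lemma IsMomentSeq.summable_momentFunctional {m : ℕ → ℝ} (h : IsMomentSeq m) {P : ℕ → ℝ[X]}
    {u : ℕ → ℝ} (hu : Summable u) (hP : ∀ k, ∀ t ∈ Icc (0 : ℝ) 1, |(P k).eval t| ≤ u k) :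
    Summable fun k => momentFunctional m (P k) :=
  Summable.of_norm_bounded (hu.mul_right (m 0)) fun k => h.abs_momentFunctional_le (hP k)

/-- Positivity of the functional extends to normally convergent series of polynomials whose sum is
nonnegative on `[0,1]`, since the partial sums are eventually at least `-ε`. -/
lemma IsMomentSeq.tsum_nonneg {m : ℕ → ℝ} (h : IsMomentSeq m) {P : ℕ → ℝ[X]} {u : ℕ → ℝ}
    (hu : Summable u) (hP : ∀ k, ∀ t ∈ Icc (0 : ℝ) 1, |(P k).eval t| ≤ u k)
    (hs : ∀ t ∈ Icc (0 : ℝ) 1, 0 ≤ ∑' k, (P k).eval t) :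
    0 ≤ ∑' k, momentFunctional m (P k) := by
  have hunif := tendstoUniformlyOn_tsum_nat (f := fun k t => (P k).eval t) (s := Icc (0 : ℝ) 1) hu hP
  have hlim := (h.summable_momentFunctional hu hP).hasSum.tendsto_sum_nat
  have h0 : ∀ c, momentFunctional m (C c) = c * m 0 := fun c => by
    simpa using momentFunctional_C_mul_X_pow m c 0
  have hm0 : 0 ≤ m 0 := by simpa only [h0, one_mul] using h (C 1) (by simp)
  have key : ∀ ε > 0, -(ε * m 0) ≤ ∑' k, momentFunctional m (P k) := by
    intro ε hε
    refine ge_of_tendsto hlim ?_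
    filter_upwards [Metric.tendstoUniformlyOn_iff.mp hunif ε hε] with N hN
    have := h (C ε + ∑ k ∈ Finset.range N, P k) fun t ht => by
      have h1 := hN t ht
      rw [Real.dist_eq, abs_lt] at h1
      rw [eval_add, eval_C, eval_finsetSum]
      linarith [hs t ht, h1.2]
    rw [map_add, h0, map_sum] at this
    linarith
  have hlim0 : Tendsto (fun ε : ℝ => -(ε * m 0)) (𝓝[>] 0) (𝓝 0) := by
    have : Tendsto (fun ε : ℝ => -(ε * m 0)) (𝓝 0) (𝓝 (-(0 * m 0))) := by
      apply Continuous.tendsto; fun_prop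
    simpa using this.mono_left nhdsWithin_le_nhds
  exact le_of_tendsto hlim0 (by filter_upwards [self_mem_nhdsWithin] with ε hε using key ε hε)

lemma hasSum_one_sub_rpow_neg (σ : ℝ) {x : ℝ} (hx : |x| < 1) :
    HasSum (fun k : ℕ => risingFactorial σ k / k.factorial * x ^ k) ((1 - x) ^ (-σ)) := by
  have h := (Real.one_div_one_sub_rpow_hasFPowerSeriesOnBall_zero σ).hasSum (y := x)
    (by simpa [enorm_eq_nnnorm, ← NNReal.coe_lt_coe] using hx)
  have hc : ∀ k : ℕ, Ring.choose (σ + k - 1) k = risingFactorial σ k / k.factorial := by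
    intro k
    have h1 := Ring.factorial_nsmul_multichoose_eq_ascPochhammer σ k
    have h2 : Ring.choose (σ + k - 1) k = Ring.multichoose σ k := by
      rw [Ring.choose]; congr 1; ring
    have h3 : (ascPochhammer ℕ k).smeval σ = risingFactorial σ k := by
      rw [Polynomial.ascPochhammer_smeval_eq_eval, risingFactorial]
      clear h1 h2
      induction k with
      | zero => simp
      | succ k ih => rw [ascPochhammer_succ_eval, ih, Finset.prod_range_succ]
    rw [h2, eq_div_iff (by positivity), ← h3, ← h1, nsmul_eq_mul, mul_comm]
  have hpos : 0 < 1 - x := by linarith [(abs_lt.mp hx).2]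
  rw [Real.rpow_neg hpos.le]
  simpa [FormalMultilinearSeries.ofScalars_apply_eq, hc, mul_comm] using h

/-! ### Positive definiteness of the kernel `(1 + s r²)^(-σ)` -/

section Gaussian

variable {n m : ℕ} (t : Fin m → EuclideanSpace ℝ (Fin n)) (x : Fin m → ℝ)

lemma sum_inner_pow_nonneg (k : ℕ) :
    0 ≤ ∑ i, ∑ j, x i * x j * (inner ℝ (t i) (t j)) ^ k := by
  have hps : (Matrix.of fun i j => (inner ℝ (t i) (t j)) ^ k).PosSemidef := by
    induction k with
    | zero =>
      have := Matrix.posSemidef_vecMulVec_self_star (fun _ : Fin m => (1 : ℝ))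
      convert this using 1
      ext i j; simp [Matrix.vecMulVec]
    | succ k ih =>
      have := Matrix.PosSemidef.hadamard (𝕜 := ℝ) ih (Matrix.posSemidef_gram ℝ t)
      have e : (Matrix.of fun i j => (inner ℝ (t i) (t j)) ^ (k + 1)) =
          Matrix.hadamard (Matrix.of fun i j => (inner ℝ (t i) (t j)) ^ k) (Matrix.gram ℝ t) := by
        ext i j; simp [Matrix.hadamard, pow_succ]
      rw [e]; exact this
  have := hps.dotProduct_mulVec_nonneg x
  simp only [dotProduct, Matrix.mulVec, Matrix.of_apply, Finset.mul_sum, star_trivial,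
    Pi.star_apply] at this
  refine this.trans_eq (Finset.sum_congr rfl fun i _ => Finset.sum_congr rfl fun j _ => by ring)

/-- Gaussians are positive definite:
`exp (-u ‖s - t‖²) = exp (-u ‖s‖²) exp (-u ‖t‖²) exp (2 u ⟪s, t⟫)` and the last factor is a power
series in the Gram kernel with nonnegative coefficients. -/
lemma sum_gaussian_nonneg {u : ℝ} (hu : 0 ≤ u) :
    0 ≤ ∑ i, ∑ j, x i * x j * Real.exp (-(u * ‖t i - t j‖ ^ 2)) := by
  set y : Fin m → ℝ := fun i => x i * Real.exp (-(u * ‖t i‖ ^ 2)) with hy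
  have h1 : ∑ i, ∑ j, x i * x j * Real.exp (-(u * ‖t i - t j‖ ^ 2)) =
      ∑ i, ∑ j, y i * y j * Real.exp (2 * u * inner ℝ (t i) (t j)) := by
    refine Finset.sum_congr rfl fun i _ => Finset.sum_congr rfl fun j _ => ?_
    have : -(u * ‖t i - t j‖ ^ 2) =
        -(u * ‖t i‖ ^ 2) + -(u * ‖t j‖ ^ 2) + 2 * u * inner ℝ (t i) (t j) := by
      rw [norm_sub_sq_real]; ring
    rw [this, Real.exp_add, Real.exp_add, hy]
    ring
  have h2 : HasSum (fun k : ℕ => ∑ i, ∑ j, y i * y j *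
        ((k.factorial : ℝ)⁻¹ * (2 * u * inner ℝ (t i) (t j)) ^ k))
      (∑ i, ∑ j, y i * y j * Real.exp (2 * u * inner ℝ (t i) (t j))) := by
    refine hasSum_sum fun i _ => hasSum_sum fun j _ => HasSum.mul_left _ ?_
    have := NormedSpace.exp_series_hasSum_exp' (𝕂 := ℝ) (2 * u * inner ℝ (t i) (t j))
    rw [← Real.exp_eq_exp_ℝ] at this
    simpa using this
  rw [h1]
  refine h2.nonneg fun k => ?_
  have h3 : ∑ i, ∑ j, y i * y j * ((k.factorial : ℝ)⁻¹ * (2 * u * inner ℝ (t i) (t j)) ^ k) =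
      ((k.factorial : ℝ)⁻¹ * (2 * u) ^ k) * ∑ i, ∑ j, y i * y j * (inner ℝ (t i) (t j)) ^ k := by
    simp only [Finset.mul_sum]
    refine Finset.sum_congr rfl fun i _ => Finset.sum_congr rfl fun j _ => ?_
    rw [mul_pow]; ring
  rw [h3]
  exact mul_nonneg (by positivity) (sum_inner_pow_nonneg t y k)

/-- `(1 + s r²)^(-σ)` is a Gamma mixture of the Gaussians `exp (-u s r²)`. -/
lemma sum_rpow_neg_nonneg {σ : ℝ} (hσ : 0 < σ) {s : ℝ} (hs : 0 ≤ s) :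
    0 ≤ ∑ i, ∑ j, x i * x j * (1 + s * ‖t i - t j‖ ^ 2) ^ (-σ) := by
  have hI : ∀ c : ℝ, 0 < c → MeasureTheory.IntegrableOn
      (fun u : ℝ => u ^ (σ - 1) * Real.exp (-(c * u))) (Ioi 0) := by
    intro c hc
    have := integrableOn_rpow_mul_exp_neg_mul_rpow (s := σ - 1) (p := 1) (b := c)
      (by linarith) one_pos hc
    simpa using this
  have hc : ∀ i j, 0 < 1 + s * ‖t i - t j‖ ^ 2 := fun i j => by positivity
  have hint : ∀ c : ℝ, 0 < c → ∫ u in Ioi (0 : ℝ), u ^ (σ - 1) * Real.exp (-(c * u)) =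
      c ^ (-σ) * Real.Gamma σ := by
    intro c hc
    rw [Real.integral_rpow_mul_exp_neg_mul_Ioi hσ hc, one_div, Real.inv_rpow hc.le,
      Real.rpow_neg hc.le]
  have h1 : (∑ i, ∑ j, x i * x j * (1 + s * ‖t i - t j‖ ^ 2) ^ (-σ)) * Real.Gamma σ =
      ∫ u in Ioi (0 : ℝ), ∑ i, ∑ j, x i * x j *
        (u ^ (σ - 1) * Real.exp (-((1 + s * ‖t i - t j‖ ^ 2) * u))) := by
    rw [MeasureTheory.integral_finsetSum, Finset.sum_mul]
    · refine Finset.sum_congr rfl fun i _ => ?_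
      rw [MeasureTheory.integral_finsetSum, Finset.sum_mul]
      · refine Finset.sum_congr rfl fun j _ => ?_
        rw [MeasureTheory.integral_const_mul, hint _ (hc i j), mul_assoc]
      · exact fun j _ => (hI _ (hc i j)).const_mul _
    · exact fun i _ => MeasureTheory.integrable_finsetSum _ fun j _ => (hI _ (hc i j)).const_mul _
  refine nonneg_of_mul_nonneg_left (h1 ▸ ?_) (Real.Gamma_pos_of_pos hσ)
  refine MeasureTheory.setIntegral_nonneg measurableSet_Ioi fun u hu => ?_
  have hu' : (0 : ℝ) < u := hu
  have h2 : ∑ i, ∑ j, x i * x j *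
        (u ^ (σ - 1) * Real.exp (-((1 + s * ‖t i - t j‖ ^ 2) * u))) =
      (u ^ (σ - 1) * Real.exp (-u)) *
        ∑ i, ∑ j, x i * x j * Real.exp (-((u * s) * ‖t i - t j‖ ^ 2)) := by
    simp only [Finset.mul_sum]
    refine Finset.sum_congr rfl fun i _ => Finset.sum_congr rfl fun j _ => ?_
    have : -((1 + s * ‖t i - t j‖ ^ 2) * u) = -u + -((u * s) * ‖t i - t j‖ ^ 2) := by ring
    rw [this, Real.exp_add]
    ring
  rw [h2]
  exact mul_nonneg (by positivity) (sum_gaussian_nonneg t x (by positivity))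

end Gaussian

lemma analyticAt_tsum_mul_pow {d : ℕ → ℝ} (hd : ∀ x : ℝ, |x| < 1 → Summable fun k => |d k| * |x| ^ k)
    {x : ℝ} (hx : |x| < 1) : AnalyticAt ℝ (fun y => ∑' k, d k * y ^ k) x := by
  obtain ⟨ρ, hxρ, hρ1⟩ := exists_between hx
  have hρ0 : 0 < ρ := (abs_nonneg x).trans_lt hxρ
  lift ρ to NNReal using hρ0.le
  set q := FormalMultilinearSeries.ofScalars ℝ d
  have hr : (ρ : ENNReal) ≤ q.radius := by
    refine q.le_radius_of_summable_norm ?_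
    have := hd ρ (by simpa using hρ1)
    simpa [q, FormalMultilinearSeries.ofScalars_norm] using this
  have hq := q.hasFPowerSeriesOnBall (lt_of_lt_of_le (by exact_mod_cast hρ0) hr)
  have h1 : AnalyticAt ℝ q.sum x := by
    refine hq.analyticAt_of_mem ?_
    refine Metric.eball_subset_eball hr ?_
    simpa [enorm_eq_nnnorm, ← NNReal.coe_lt_coe] using hxρ
  have h2 : q.sum = fun y => ∑' k, d k * y ^ k := by
    ext y
    simp [q, FormalMultilinearSeries.sum, mul_comm]
  rwa [h2] at h1

/-! ### Analytic continuation of the hypergeometric series -/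

section Continuation

variable (σ : ℝ) (m : ℕ → ℝ)

/-- The `k`-th term of the expansion of `(1 + s r²)^(-σ)` in powers of `1 - s`, as a polynomial in
`s`; it comes from `1 + s r² = (1 + r²) (1 - (1 - s) r² / (1 + r²))`. Unlike the binomial
expansion in powers of `s r²`, it converges on `[0,1]` for all real `r`. -/
noncomputable def kernelTerm (r : ℝ) (k : ℕ) : ℝ[X] :=
  C ((1 + r ^ 2) ^ (-σ) * (risingFactorial σ k / k.factorial * (r ^ 2 / (1 + r ^ 2)) ^ k)) *
    (1 - X) ^ k

/-- The moment functional of `m` applied termwise to the expansion of `(1 + s r²)^(-σ)`; if `m` is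
the moment sequence of `μ`, this is `∫ (1 + s r²)^(-σ) dμ(s)`. -/
noncomputable def mixture (r : ℝ) : ℝ := ∑' k, momentFunctional m (kernelTerm σ r k)

variable {σ m}

lemma abs_sq_div_lt_one (r : ℝ) : |r ^ 2 / (1 + r ^ 2)| < 1 := by
  rw [abs_of_nonneg (by positivity), div_lt_one (by positivity)]
  linarith

lemma summable_kernelBound (r : ℝ) : Summable fun k : ℕ =>
    (1 + r ^ 2) ^ (-σ) * (risingFactorial σ k / k.factorial * (r ^ 2 / (1 + r ^ 2)) ^ k) :=
  (hasSum_one_sub_rpow_neg σ (abs_sq_div_lt_one r)).summable.mul_left _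

lemma abs_eval_kernelTerm_le (hσ : 0 < σ) (r : ℝ) (k : ℕ) {s : ℝ} (hs : s ∈ Icc (0 : ℝ) 1) :
    |(kernelTerm σ r k).eval s| ≤
      (1 + r ^ 2) ^ (-σ) * (risingFactorial σ k / k.factorial * (r ^ 2 / (1 + r ^ 2)) ^ k) := by
  have h0 := (risingFactorial_pos hσ k).le
  have h1 : 0 ≤ 1 - s := by linarith [hs.2]
  have h2 : (1 - s) ^ k ≤ 1 := pow_le_one₀ h1 (by linarith [hs.1])
  simp only [kernelTerm, eval_mul, eval_C, eval_pow, eval_sub, eval_one, eval_X]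
  rw [abs_of_nonneg (by positivity)]
  exact mul_le_of_le_one_right (by positivity) h2

lemma hasSum_eval_kernelTerm (r : ℝ) {s : ℝ} (hs : s ∈ Icc (0 : ℝ) 1) :
    HasSum (fun k => (kernelTerm σ r k).eval s) ((1 + s * r ^ 2) ^ (-σ)) := by
  have h1 : 0 ≤ 1 - s := by linarith [hs.2]
  have hw : 0 ≤ r ^ 2 / (1 + r ^ 2) := by positivity
  have hx : |r ^ 2 / (1 + r ^ 2) * (1 - s)| < 1 := by
    rw [abs_mul, abs_of_nonneg h1]
    exact (mul_le_of_le_one_right (abs_nonneg _) (by linarith [hs.1])).trans_lt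
      (abs_sq_div_lt_one r)
  have h := (hasSum_one_sub_rpow_neg σ hx).mul_left ((1 + r ^ 2) ^ (-σ))
  rw [← Real.mul_rpow (by positivity) (by linarith [(abs_lt.mp hx).2])] at h
  have e : (1 + r ^ 2) * (1 - r ^ 2 / (1 + r ^ 2) * (1 - s)) = 1 + s * r ^ 2 := by
    field_simp
    ring
  rw [e] at h
  have e2 : (fun k => (kernelTerm σ r k).eval s) = fun k : ℕ => (1 + r ^ 2) ^ (-σ) *
      (risingFactorial σ k / k.factorial * (r ^ 2 / (1 + r ^ 2) * (1 - s)) ^ k) := by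
    ext k
    simp only [kernelTerm, eval_mul, eval_C, eval_pow, eval_sub, eval_one, eval_X, mul_pow]
    ring
  rw [e2]
  exact h

lemma analyticAt_mixture (hσ : 0 < σ) (hm : IsMomentSeq m) (r : ℝ) :
    AnalyticAt ℝ (mixture σ m) r := by
  set d : ℕ → ℝ := fun k => risingFactorial σ k / k.factorial * momentFunctional m ((1 - X) ^ k)
  have hF : mixture σ m = fun r => (1 + r ^ 2) ^ (-σ) * ∑' k, d k * (r ^ 2 / (1 + r ^ 2)) ^ k := by
    ext r
    rw [mixture, ← tsum_mul_left]
    refine tsum_congr fun k => ?_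
    rw [kernelTerm, momentFunctional_C_mul]
    simp only [d]
    ring
  have hd : ∀ x : ℝ, |x| < 1 → Summable fun k => |d k| * |x| ^ k := by
    intro x hx
    have h1 := (hasSum_one_sub_rpow_neg σ (x := |x|) (by simpa using hx)).summable.mul_right (m 0)
    refine Summable.of_nonneg_of_le (fun k => by positivity) (fun k => ?_) h1
    have h0 := (risingFactorial_pos hσ k).le
    have h2 : |momentFunctional m ((1 - X) ^ k)| ≤ 1 * m 0 := by
      refine hm.abs_momentFunctional_le fun s hs => ?_
      have h1 : 0 ≤ 1 - s := by linarith [hs.2]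
      simp only [eval_pow, eval_sub, eval_one, eval_X]
      rw [abs_of_nonneg (by positivity)]
      exact pow_le_one₀ h1 (by linarith [hs.1])
    simp only [d, abs_mul]
    rw [abs_of_nonneg (show 0 ≤ risingFactorial σ k / (k.factorial : ℝ) by positivity)]
    calc _ = risingFactorial σ k / k.factorial * |x| ^ k *
          |momentFunctional m ((1 - X) ^ k)| := by ring
      _ ≤ _ := by
        refine mul_le_mul_of_nonneg_left (by simpa using h2) (by positivity)
  have hpos : 1 + r ^ 2 ≠ 0 := by positivity
  have hq : AnalyticAt ℝ (fun r : ℝ => 1 + r ^ 2) r := by fun_prop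
  have hw : AnalyticAt ℝ (fun r : ℝ => r ^ 2 / (1 + r ^ 2)) r :=
    AnalyticAt.div (by fun_prop) hq hpos
  rw [hF]
  refine AnalyticAt.mul ?_ ?_
  · have e : (fun r : ℝ => (1 + r ^ 2) ^ (-σ)) =
        fun r : ℝ => Real.exp (Real.log (1 + r ^ 2) * (-σ)) := by
      ext r
      rw [Real.rpow_def_of_pos (by positivity)]
    rw [e]
    exact ((hq.log (by positivity)).mul analyticAt_const).rexp
  · exact AnalyticAt.fun_comp (g := fun y => ∑' k, d k * y ^ k)
      (f := fun r : ℝ => r ^ 2 / (1 + r ^ 2))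
      (analyticAt_tsum_mul_pow hd (abs_sq_div_lt_one r)) hw

/-- Both series are the termwise image of an expansion of `(1 + s r²)^(-σ)` that converges
normally for `s ∈ [0,1]`. -/
lemma mixture_eq_tsum (hσ : 0 < σ) (hm : IsMomentSeq m) {r : ℝ} (hr0 : 0 ≤ r) (hr : r < 1) :
    mixture σ m r = ∑' k : ℕ, risingFactorial σ k / k.factorial * (-(r ^ 2)) ^ k * m k := by
  set A : ℕ → ℝ[X] := fun k => C (risingFactorial σ k / k.factorial * (-(r ^ 2)) ^ k) * X ^ k
  have hr2 : |r ^ 2| < 1 := by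
    rw [abs_of_nonneg (by positivity)]
    exact pow_lt_one₀ hr0 hr two_ne_zero
  have hAu := (hasSum_one_sub_rpow_neg σ hr2).summable
  have hA : ∀ k, ∀ s ∈ Icc (0 : ℝ) 1,
      |(A k).eval s| ≤ risingFactorial σ k / k.factorial * (r ^ 2) ^ k := by
    intro k s hs
    have h0 := (risingFactorial_pos hσ k).le
    have h1 : s ^ k ≤ 1 := pow_le_one₀ hs.1 hs.2
    have h2 : 0 ≤ s ^ k := pow_nonneg hs.1 k
    simp only [A, eval_mul, eval_C, eval_pow, eval_X, abs_mul, abs_pow, abs_neg]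
    rw [abs_of_nonneg (show 0 ≤ risingFactorial σ k / (k.factorial : ℝ) by positivity),
      abs_of_nonneg hs.1, sq_abs]
    exact mul_le_of_le_one_right (by positivity) h1
  have hAs : ∀ s ∈ Icc (0 : ℝ) 1, HasSum (fun k => (A k).eval s) ((1 + s * r ^ 2) ^ (-σ)) := by
    intro s hs
    have hx : |-(s * r ^ 2)| < 1 := by
      rw [abs_neg, abs_mul, abs_of_nonneg hs.1]
      exact (mul_le_of_le_one_left (abs_nonneg _) hs.2).trans_lt hr2
    have h := hasSum_one_sub_rpow_neg σ hx
    rw [sub_neg_eq_add] at h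
    convert h using 1
    ext k
    simp only [A, eval_mul, eval_C, eval_pow, eval_X]
    rw [← mul_neg, mul_pow]
    ring
  have hu := (summable_kernelBound (σ := σ) r).add hAu
  have key : ∀ c : ℝ, |c| = 1 → 0 ≤ ∑' k, momentFunctional m (C c * (kernelTerm σ r k - A k)) := by
    intro c hc
    refine hm.tsum_nonneg hu (fun k s hs => ?_) fun s hs => ?_
    · rw [eval_mul, eval_C, eval_sub, abs_mul, hc, one_mul]
      exact (abs_sub _ _).trans (add_le_add (abs_eval_kernelTerm_le hσ r k hs) (hA k s hs))
    · have := ((hasSum_eval_kernelTerm (σ := σ) r hs).sub (hAs s hs)).mul_left c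
      simp only [eval_mul, eval_C, eval_sub]
      rw [this.tsum_eq, sub_self, mul_zero]
  have hS1 := hm.summable_momentFunctional (summable_kernelBound (σ := σ) r)
    (fun k s hs => abs_eval_kernelTerm_le hσ r k hs)
  have hS2 := hm.summable_momentFunctional hAu hA
  have hc : ∀ c : ℝ, ∑' k, momentFunctional m (C c * (kernelTerm σ r k - A k)) =
      c * (mixture σ m r - ∑' k, momentFunctional m (A k)) := by
    intro c
    simp only [momentFunctional_C_mul, map_sub]
    rw [tsum_mul_left, hS1.tsum_sub hS2, mixture]
  have h1 := key 1 (by simp)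
  have h2 := key (-1) (by simp)
  rw [hc] at h1 h2
  have h3 : mixture σ m r = ∑' k, momentFunctional m (A k) := by linarith
  rw [h3]
  simp only [A, momentFunctional_C_mul_X_pow]

/-- The quadratic form is the functional of `m` applied to the nonnegative function
`s ↦ ∑ i j, x i * x j * (1 + s ‖t i - t j‖²)^(-σ)` on `[0,1]`. -/
lemma sum_mixture_nonneg (hσ : 0 < σ) (hm : IsMomentSeq m) {n l : ℕ}
    (t : Fin l → EuclideanSpace ℝ (Fin n)) (x : Fin l → ℝ) :
    0 ≤ ∑ i, ∑ j, x i * x j * mixture σ m ‖t i - t j‖ := by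
  set P : ℕ → ℝ[X] := fun k => ∑ i, ∑ j, C (x i * x j) * kernelTerm σ ‖t i - t j‖ k with hPdef
  have hS : HasSum (fun k => momentFunctional m (P k))
      (∑ i, ∑ j, x i * x j * mixture σ m ‖t i - t j‖) := by
    simp only [P, map_sum, momentFunctional_C_mul]
    refine hasSum_sum fun i _ => hasSum_sum fun j _ => HasSum.mul_left _ ?_
    exact (hm.summable_momentFunctional (summable_kernelBound (σ := σ) _)
      (fun k s hs => abs_eval_kernelTerm_le hσ _ k hs)).hasSum
  have hu : Summable fun k : ℕ => ∑ i, ∑ j, |x i * x j| * ((1 + ‖t i - t j‖ ^ 2) ^ (-σ) *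
      (risingFactorial σ k / k.factorial *
        (‖t i - t j‖ ^ 2 / (1 + ‖t i - t j‖ ^ 2)) ^ k)) :=
    summable_sum fun i _ => summable_sum fun j _ =>
      (summable_kernelBound (σ := σ) _).mul_left _
  rw [← hS.tsum_eq]
  refine hm.tsum_nonneg hu (fun k s hs => ?_) fun s hs => ?_
  · simp only [P, eval_finsetSum, eval_mul, eval_C]
    refine (Finset.abs_sum_le_sum_abs _ _).trans (Finset.sum_le_sum fun i _ => ?_)
    refine (Finset.abs_sum_le_sum_abs _ _).trans (Finset.sum_le_sum fun j _ => ?_)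
    rw [abs_mul]
    exact mul_le_mul_of_nonneg_left (abs_eval_kernelTerm_le hσ _ k hs) (abs_nonneg _)
  · have : HasSum (fun k => (P k).eval s)
        (∑ i, ∑ j, x i * x j * (1 + s * ‖t i - t j‖ ^ 2) ^ (-σ)) := by
      simp only [P, eval_finsetSum, eval_mul, eval_C]
      exact hasSum_sum fun i _ => hasSum_sum fun j _ => (hasSum_eval_kernelTerm _ hs).mul_left _
    rw [this.tsum_eq]
    exact sum_rpow_neg_nonneg t x hσ hs.1

end Continuation

/-- For a symmetric real kernel, nonnegativity of the quadratic form on real vectors, applied to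
the real and imaginary parts, yields nonnegativity on complex vectors. -/
lemma complex_of_real_form {l : ℕ} {K : Fin l → Fin l → ℝ} (hK : ∀ i j, K i j = K j i)
    (h : ∀ x : Fin l → ℝ, 0 ≤ ∑ i, ∑ j, x i * x j * K i j) (ξ : Fin l → ℂ) :
    ∃ c : ℝ, 0 ≤ c ∧ (∑ i, ∑ j, (K i j : ℂ) * ξ i * (starRingEnd ℂ) (ξ j)) = (c : ℂ) := by
  refine ⟨_, add_nonneg (h fun i => (ξ i).re) (h fun i => (ξ i).im), ?_⟩
  apply Complex.ext
  · simp only [Complex.re_sum, Complex.ofReal_re, ← Finset.sum_add_distrib]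
    refine Finset.sum_congr rfl fun i _ => Finset.sum_congr rfl fun j _ => ?_
    simp
    ring
  · simp only [Complex.im_sum, Complex.ofReal_im]
    have e : ∑ i, ∑ j, ((K i j : ℂ) * ξ i * (starRingEnd ℂ) (ξ j)).im =
        ∑ i, ∑ j, K i j * (ξ i).im * (ξ j).re - ∑ i, ∑ j, K i j * (ξ i).re * (ξ j).im := by
      simp only [← Finset.sum_sub_distrib]
      refine Finset.sum_congr rfl fun i _ => Finset.sum_congr rfl fun j _ => ?_
      simp
      ring
    rw [e, Finset.sum_comm, sub_eq_zero]
    refine Finset.sum_congr rfl fun i _ => Finset.sum_congr rfl fun j _ => ?_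
    rw [hK]; ring

/-- Let `σ > 0` and let `a, b` be positive vectors of the same length
with `v_{a,b}(t) ≥ 0` on `(0,1]`. If `f : [0,∞) → ℝ` is continuous, real-analytic on
`(0,∞)`, and agrees for `0 ≤ r < 1` with the Gauss-type series
`p+1Fp(σ,a;b;-r²)`, then `f` is radial positive definite in every dimension `n ≥ 1`
(i.e. belongs to `Φ_∞`). -/
theorem gauss_type_in_Phi_infty
    (p : ℕ) (σ : ℝ) (hσ : 0 < σ)
    (a b : Fin p → ℝ)
    (ha : ∀ i, 0 < a i) (hb : ∀ i, 0 < b i)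
    (hv : ∀ t : ℝ, 0 < t → t ≤ 1 → 0 ≤ ∑ i, (t ^ a i - t ^ b i))
    (f : ℝ → ℝ)
    (hf_cont : ContinuousOn f (Set.Ici 0))
    (hf_an : AnalyticOnNhd ℝ f (Set.Ioi 0))
    (hf_ser : ∀ r : ℝ, 0 ≤ r → r < 1 →
      f r = ∑' k : ℕ,
        risingFactorial σ k * (∏ i, risingFactorial (a i) k) * (-(r ^ 2)) ^ k /
          ((∏ i, risingFactorial (b i) k) * (k.factorial : ℝ))) :
    ∀ n : ℕ, 1 ≤ n → IsRPD n f := by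
  intro n _
  set m : ℕ → ℝ := fun k => (∏ j, risingFactorial (a j) k) / ∏ j, risingFactorial (b j) k with hmdef
  have hm : IsMomentSeq m := isMomentSeq_pochhammer ha hb hv
  have hsmall : ∀ r, 0 ≤ r → r < 1 → f r = mixture σ m r := by
    intro r hr0 hr1
    rw [hf_ser r hr0 hr1, mixture_eq_tsum hσ hm hr0 hr1]
    refine tsum_congr fun k => ?_
    simp only [hmdef]
    rw [div_mul_eq_mul_div, div_mul_div_comm]
    ring_nf
  have hpos : EqOn f (mixture σ m) (Ioi 0) := by
    refine hf_an.eqOn_of_preconnected_of_eventuallyEq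
      (fun r _ => analyticAt_mixture hσ hm r) isPreconnected_Ioi (z₀ := 1 / 2) (by simp) ?_
    filter_upwards [Ioo_mem_nhds (show (0 : ℝ) < 1 / 2 by norm_num)
      (show (1 / 2 : ℝ) < 1 by norm_num)] with r hr
    exact hsmall r hr.1.le hr.2
  have hall : ∀ r, 0 ≤ r → f r = mixture σ m r := by
    intro r hr
    rcases hr.eq_or_lt with h | h
    · exact hsmall r hr (by linarith)
    · exact hpos h
  refine ⟨hf_cont, fun l t ξ => ?_⟩
  refine complex_of_real_form (K := fun i j => f ‖t i - t j‖)
    (fun i j => by rw [norm_sub_rev]) (fun x => ?_) ξ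
  simp only [hall _ (norm_nonneg _)]
  exact sum_mixture_nonneg hσ hm t x
end

section
/- For any real vectors a = (a_1,…,a_p) and b = (b_1,…,b_p), there exists n ∈ ℕ such that the vector (b_1+n,…,b_p+n, n+1) is weakly supermajorized by the vector (a_1+n,…,a_p+n, 1); that is, all entries of both vectors are positive and, writing u_(1) ≤ … ≤ u_(p+1) for the increasing rearrangement of (a_1+n,…,a_p+n,1) and v_(1) ≤ … ≤ v_(p+1) for the increasing rearrangement of (b_1+n,…,b_p+n,n+1), one has ∑_{i=1}^k u_(i) ≤ ∑_{i=1}^k v_(i) for every k = 1,…,p+1. -/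
/-! Let `M ≥ 0` bound all `|a i|` and `|b i|`. Every entry of `u = (a + n, 1)` is at most `n + M`,
every entry of `v = (b + n, n + 1)` is at least `n - M`, and the smallest entry of `u` is at most
`1`. So the first terms of the increasing rearrangements differ by about `n` in favour of `v`,
while each of the at most `p` further terms loses at most `2 * M`. Any `n` large compared with
`M * (p + 1)` therefore works. -/

/-- `WeaklySupermajorizedBy v u` expresses `v ≺^W u` ("`v` is weakly supermajorized by
`u`"): all entries of `u` and `v` are positive, and for every pair of permutations
arranging `u` and `v` in increasing order, each initial partial sum of the increasing
rearrangement of `u` is at most the corresponding partial sum for `v`. -/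
def WeaklySupermajorizedBy {r : ℕ} (v u : Fin r → ℝ) : Prop :=
  (∀ i, 0 < u i) ∧ (∀ i, 0 < v i) ∧
  ∀ σ τ : Equiv.Perm (Fin r), Monotone (u ∘ σ) → Monotone (v ∘ τ) →
    ∀ k : Fin r,
      ∑ i ∈ Finset.univ.filter (· ≤ k), u (σ i) ≤
        ∑ i ∈ Finset.univ.filter (· ≤ k), v (τ i)

/-- For any real vectors `a, b` of length `p`, there is an `n ∈ ℕ`
such that `(b_1+n,…,b_p+n, n+1)` is weakly supermajorized by `(a_1+n,…,a_p+n, 1)`. -/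
theorem exists_shift_weak_supermajorization
    (p : ℕ) (a b : Fin p → ℝ) :
    ∃ n : ℕ,
      WeaklySupermajorizedBy
        (Fin.snoc (fun i => b i + n) ((n : ℝ) + 1))
        (Fin.snoc (fun i => a i + n) (1 : ℝ)) := by
  obtain ⟨M, hM0, hMa, hMb⟩ : ∃ M : ℝ, 0 ≤ M ∧ (∀ i, |a i| ≤ M) ∧ ∀ i, |b i| ≤ M := by
    refine ⟨‖a‖ + ‖b‖, by positivity, fun i => ?_, fun i => ?_⟩
    · have := norm_le_pi_norm a i
      rw [Real.norm_eq_abs] at this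
      linarith [norm_nonneg b]
    · have := norm_le_pi_norm b i
      rw [Real.norm_eq_abs] at this
      linarith [norm_nonneg a]
  obtain ⟨n, hn⟩ := exists_nat_ge (2 * M * (p + 1) + M + 1)
  have hMp : 0 ≤ 2 * M * ((p : ℝ) + 1) := by positivity
  refine ⟨n, ?_⟩
  set u : Fin (p + 1) → ℝ := Fin.snoc (fun i => a i + n) (1 : ℝ) with hu
  set v : Fin (p + 1) → ℝ := Fin.snoc (fun i => b i + n) ((n : ℝ) + 1) with hv
  have hu_last : u (Fin.last p) = 1 := by simp [hu]
  have hu_bd : ∀ i, 0 < u i ∧ u i ≤ n + M := by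
    intro i
    induction i using Fin.lastCases with
    | last => rw [hu_last]; constructor <;> linarith
    | cast i =>
      have h := abs_le.mp (hMa i)
      have e : u i.castSucc = a i + n := by simp [hu]
      rw [e]; constructor <;> linarith
  have hv_bd : ∀ i, (n : ℝ) - M ≤ v i := by
    intro i
    induction i using Fin.lastCases with
    | last =>
      have e : v (Fin.last p) = n + 1 := by simp [hv]
      rw [e]; linarith
    | cast i =>
      have h := abs_le.mp (hMb i)
      have e : v i.castSucc = b i + n := by simp [hv]
      rw [e]; linarith
  refine ⟨fun i => (hu_bd i).1, fun i => by linarith [hv_bd i], ?_⟩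
  intro σ τ hσ _ k
  have h0 : u (σ 0) ≤ 1 := by
    have h := hσ (Fin.zero_le (σ.symm (Fin.last p)))
    simpa [hu_last] using h
  -- Termwise comparison: each index costs at most `2 * M`, and index `0` gains `n + M - 1`.
  have hterm : ∀ i ∈ Finset.univ.filter (· ≤ k),
      u (σ i) ≤ v (τ i) + (2 * M - if i = 0 then (n : ℝ) + M - 1 else 0) := by
    intro i _
    have h2 := hv_bd (τ i)
    split_ifs with hi
    · subst hi
      linarith
    · linarith [(hu_bd (σ i)).2]
  refine (Finset.sum_le_sum hterm).trans ?_
  have hcard : ((Finset.univ.filter (· ≤ k)).card : ℝ) ≤ p + 1 := by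
    have h := Finset.card_le_univ (Finset.univ.filter (· ≤ k))
    rw [Fintype.card_fin] at h
    exact_mod_cast h
  have hmul := mul_le_mul_of_nonneg_right hcard (by linarith : 0 ≤ 2 * M)
  rw [Finset.sum_add_distrib, Finset.sum_sub_distrib, Finset.sum_const, nsmul_eq_mul,
    Finset.sum_ite_eq' _ (0 : Fin (p + 1)), if_pos (by simp)]
  linarith
end

section
/- Let n ≥ 1 be an integer, let f : [0,∞) → ℝ be n-RPD, and let k : (0,1) → ℝ be a nonnegative Lebesgue-integrable function. Then the function g : [0,∞) → ℝ defined by g(y) = ∫₀¹ f(yx) k(x) dx is n-RPD (in particular g is continuous and satisfies the positive-definiteness inequality). -/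
open MeasureTheory in
lemma aestronglyMeasurable_dilate_mul {f k : ℝ → ℝ} (hf : ContinuousOn f (Set.Ici 0))
    (hk : IntegrableOn k (Set.Ioo 0 1)) {y : ℝ} (hy : 0 ≤ y) :
    AEStronglyMeasurable (fun x => f (y * x) * k x) (volume.restrict (Set.Ioo (0:ℝ) 1)) := by
  refine AEStronglyMeasurable.mul ?_ hk.aestronglyMeasurable
  refine ContinuousOn.aestronglyMeasurable ?_ measurableSet_Ioo
  exact hf.comp (by fun_prop) fun x hx => mul_nonneg hy hx.1.le

/-- The integrands for all `y ∈ [0, R]` have a common bound of the form `C * ‖k x‖`. -/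
lemma exists_dilate_mul_bound {f : ℝ → ℝ} (k : ℝ → ℝ) (hf : ContinuousOn f (Set.Ici 0)) (R : ℝ) :
    ∃ C : ℝ, ∀ y ∈ Set.Icc 0 R, ∀ x ∈ Set.Ioo (0:ℝ) 1, ‖f (y * x) * k x‖ ≤ C * ‖k x‖ := by
  obtain ⟨C, hC⟩ := (isCompact_Icc (a := (0:ℝ)) (b := R)).exists_bound_of_continuousOn
    (hf.mono Set.Icc_subset_Ici_self)
  refine ⟨C, fun y hy x hx => ?_⟩
  rw [norm_mul]
  refine mul_le_mul_of_nonneg_right (hC _ ⟨mul_nonneg hy.1 hx.1.le, ?_⟩) (norm_nonneg _)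
  exact (mul_le_of_le_one_right hy.1 hx.2.le).trans hy.2

open MeasureTheory in
lemma integrableOn_dilate_mul {f k : ℝ → ℝ} (hf : ContinuousOn f (Set.Ici 0))
    (hk : IntegrableOn k (Set.Ioo 0 1)) {y : ℝ} (hy : 0 ≤ y) :
    IntegrableOn (fun x => f (y * x) * k x) (Set.Ioo (0:ℝ) 1) := by
  obtain ⟨C, hC⟩ := exists_dilate_mul_bound k hf y
  refine Integrable.mono' (hk.norm.const_mul C) (aestronglyMeasurable_dilate_mul hf hk hy) ?_
  exact (ae_restrict_iff' measurableSet_Ioo).2 (.of_forall fun x hx => hC y ⟨hy, le_rfl⟩ x hx)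

open MeasureTheory in
lemma continuousOn_kernel_average {f k : ℝ → ℝ} (hf : ContinuousOn f (Set.Ici 0))
    (hk : IntegrableOn k (Set.Ioo 0 1)) :
    ContinuousOn (fun y => ∫ x in Set.Ioo (0:ℝ) 1, f (y * x) * k x) (Set.Ici 0) := by
  intro y hy
  obtain ⟨C, hC⟩ := exists_dilate_mul_bound k hf (y + 1)
  have hnear : ∀ᶠ z in nhdsWithin y (Set.Ici 0), z ∈ Set.Icc 0 (y + 1) := by
    filter_upwards [self_mem_nhdsWithin,
      mem_nhdsWithin_of_mem_nhds (Iic_mem_nhds (lt_add_one y))] with z hz hz'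
    exact ⟨hz, hz'⟩
  refine continuousWithinAt_of_dominated (bound := fun x => C * ‖k x‖) ?_ ?_
    (hk.norm.const_mul C) ?_
  · filter_upwards [hnear] with z hz using aestronglyMeasurable_dilate_mul hf hk hz.1
  · filter_upwards [hnear] with z hz
    exact (ae_restrict_iff' measurableSet_Ioo).2 (.of_forall fun x hx => hC z hz x hx)
  · refine (ae_restrict_iff' measurableSet_Ioo).2 (.of_forall fun x hx => ?_)
    refine ContinuousWithinAt.mul ?_ continuousWithinAt_const
    exact (hf.comp (f := fun z => z * x) (by fun_prop)
      fun z hz => mul_nonneg hz hx.1.le) y hy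

/-- Averaging an `n`-RPD function against a nonnegative integrable
kernel on `(0,1)` produces an `n`-RPD function: if `f ∈ Φ_n` and `k ≥ 0` is integrable
on `(0,1)`, then `g(y) = ∫₀¹ f(yx) k(x) dx` belongs to `Φ_n`. -/
theorem rpd_of_kernel_average
    (n : ℕ) (hn : 1 ≤ n)
    (f : ℝ → ℝ) (hf : IsRPD n f)
    (k : ℝ → ℝ)
    (hk_nonneg : ∀ x ∈ Set.Ioo (0:ℝ) 1, 0 ≤ k x)
    (hk_int : MeasureTheory.IntegrableOn k (Set.Ioo 0 1)) :
    IsRPD n (fun y => ∫ x in Set.Ioo (0:ℝ) 1, f (y * x) * k x) := by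
  obtain ⟨hcont, hpos⟩ := hf
  refine ⟨continuousOn_kernel_average hcont hk_int, fun m t ξ => ?_⟩
  -- `c x` is the value of the Hermitian form of `f` at the dilated points `x • t i`.
  choose c hc0 hc using fun x : ℝ => hpos m (fun i => x • t i) ξ
  refine ⟨∫ x in Set.Ioo (0:ℝ) 1, c x * k x,
    MeasureTheory.setIntegral_nonneg measurableSet_Ioo
      fun x hx => mul_nonneg (hc0 x) (hk_nonneg x hx), ?_⟩
  have hint : ∀ i j, MeasureTheory.Integrable
      (fun x => ((f (‖t i - t j‖ * x) * k x : ℝ) : ℂ) * ξ i * (starRingEnd ℂ) (ξ j))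
      (MeasureTheory.volume.restrict (Set.Ioo (0:ℝ) 1)) := fun i j =>
    ((integrableOn_dilate_mul hcont hk_int (norm_nonneg (t i - t j))).ofReal.mul_const _).mul_const _
  calc ∑ i, ∑ j, ((∫ x in Set.Ioo (0:ℝ) 1, f (‖t i - t j‖ * x) * k x : ℝ) : ℂ)
          * ξ i * (starRingEnd ℂ) (ξ j)
      = ∫ x in Set.Ioo (0:ℝ) 1, ∑ i, ∑ j,
          ((f (‖t i - t j‖ * x) * k x : ℝ) : ℂ) * ξ i * (starRingEnd ℂ) (ξ j) := by
        rw [MeasureTheory.integral_finsetSum _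
          fun i _ => MeasureTheory.integrable_finsetSum _ fun j _ => hint i j]
        refine Finset.sum_congr rfl fun i _ => ?_
        rw [MeasureTheory.integral_finsetSum _ fun j _ => hint i j]
        refine Finset.sum_congr rfl fun j _ => ?_
        rw [MeasureTheory.integral_mul_const, MeasureTheory.integral_mul_const,
          integral_complex_ofReal]
    _ = ∫ x in Set.Ioo (0:ℝ) 1, ((c x * k x : ℝ) : ℂ) := by
        refine MeasureTheory.setIntegral_congr_fun measurableSet_Ioo fun x hx => ?_
        rw [Complex.ofReal_mul, ← hc x, Finset.sum_mul]
        refine Finset.sum_congr rfl fun i _ => ?_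
        rw [Finset.sum_mul]
        refine Finset.sum_congr rfl fun j _ => ?_
        rw [← smul_sub, norm_smul, Real.norm_of_nonneg hx.1.le, mul_comm x]
        push_cast
        ring
    _ = ((∫ x in Set.Ioo (0:ℝ) 1, c x * k x : ℝ) : ℂ) := integral_complex_ofReal
end
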